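/- arXiv:0908.3108 — 5 statements merged into one kernel-verified Lean document; each statement's English description precedes it below -/
import Mathlib

section
/- Let (D, F) be a good pair, X ⊆ ℝⁿ convex compact, A affine with A(X) ⊆ M, g ∈ ℝⁿ, and r ≥ 0. Then the function Φ_r(x, y; φ, α) = gᵀx − gᵀy + α·ln(∫_Ω e^{φ(ω)/α} p_{A(y)}(ω) P(dω)) + α·ln(∫_Ω e^{−φ(ω)/α} p_{A(x)}(ω) P(dω)) + 2αr is a continuous real-valued function on (X×X) × (F×(0,∞)) which is concave in (x, y) ∈ X×X and convex in (φ, α) ∈ F×(0,∞), and it possesses a well-defined saddle-point value: sup_{x,y∈X} inf_{φ∈F, α>0} Φ_r(x, y; φ, α) = inf_{φ∈F, α>0} sup_{x,y∈X} Φ_r(x, y; φ, α). -/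
open MeasureTheory Real Matrix Set
open scoped ENNReal

/-- A "good pair" `(𝒟, ℱ)` in the sense of Juditsky–Nemirovski:
a parametric family of positive probability densities `p μ`, `μ ∈ M`, on `(Ω, P)`,
together with a finite-dimensional linear space `F` of Borel functions on `Ω`
containing the constants, such that log-likelihood ratios belong to `F` and
`μ ↦ ln ∫ e^{φ} p_μ dP` is well defined (finite, witnessed by integrability)
and concave on `M` for every `φ ∈ F`. -/
structure GoodPair (Ω : Type*) [MeasurableSpace Ω] (P : Measure Ω)
    (E : Type*) [NormedAddCommGroup E] [NormedSpace ℝ E] where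
  M : Set E
  p : E → Ω → ℝ
  F : Submodule ℝ (Ω → ℝ)
  M_open : IsOpen M
  M_convex : Convex ℝ M
  p_meas : ∀ μ ∈ M, Measurable (p μ)
  p_pos : ∀ μ ∈ M, ∀ ω, 0 < p μ ω
  p_prob : ∀ μ ∈ M, ∫ ω, p μ ω ∂P = 1
  F_fd : FiniteDimensional ℝ F
  F_meas : ∀ φ ∈ F, Measurable φ
  F_const : ∀ c : ℝ, (fun _ : Ω => c) ∈ F
  logratio_mem : ∀ μ ∈ M, ∀ ν ∈ M, (fun ω => Real.log (p μ ω / p ν ω)) ∈ F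
  F_finite : ∀ φ ∈ F, ∀ μ ∈ M, Integrable (fun ω => Real.exp (φ ω) * p μ ω) P
  F_concave : ∀ φ ∈ F,
    ConcaveOn ℝ M (fun μ => Real.log (∫ ω, Real.exp (φ ω) * p μ ω ∂P))

variable {Ω : Type*} [MeasurableSpace Ω] {P : Measure Ω}
  {E : Type*} [NormedAddCommGroup E] [NormedSpace ℝ E] {n : ℕ}

/-- The distribution of the observation when the parameter is `μ`:
the measure with density `p μ` with respect to `P`. -/
noncomputable def obsMeasure (D : GoodPair Ω P E) (μ : E) : Measure Ω :=
  P.withDensity fun ω => ENNReal.ofReal (D.p μ ω)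

/-- The `ε`-risk of an estimate `ghat` of the linear form `gᵀx`, `x ∈ X`:
`inf {δ | sup_{x ∈ X} Prob_{ω ∼ p_{A(x)}·P} {|ghat ω - gᵀx| > δ} < ε}`. -/
noncomputable def Risk (D : GoodPair Ω P E) (A : (Fin n → ℝ) →ᵃ[ℝ] E)
    (g : Fin n → ℝ) (X : Set (Fin n → ℝ)) (ghat : Ω → ℝ) (ε : ℝ) : ℝ :=
  sInf {δ : ℝ |
    (⨆ x ∈ X, obsMeasure D (A x) {ω | δ < |ghat ω - g ⬝ᵥ x|}) < ENNReal.ofReal ε}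

/-- The minimax optimal `ε`-risk over all (Borel) estimates. -/
noncomputable def RiskStar (D : GoodPair Ω P E) (A : (Fin n → ℝ) →ᵃ[ℝ] E)
    (g : Fin n → ℝ) (X : Set (Fin n → ℝ)) (ε : ℝ) : ℝ :=
  sInf {ρ : ℝ | ∃ ghat : Ω → ℝ, Measurable ghat ∧ ρ = Risk D A g X ghat ε}

/-- The minimax optimal `ε`-risk over affine estimates, i.e. estimates `φ ∈ F`. -/
noncomputable def RiskAff (D : GoodPair Ω P E) (A : (Fin n → ℝ) →ᵃ[ℝ] E)
    (g : Fin n → ℝ) (X : Set (Fin n → ℝ)) (ε : ℝ) : ℝ :=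
  sInf {ρ : ℝ | ∃ φ ∈ D.F, ρ = Risk D A g X φ ε}

/-- The function `Φ_r(x, y; φ, α)`. -/
noncomputable def PhiFun (D : GoodPair Ω P E) (A : (Fin n → ℝ) →ᵃ[ℝ] E)
    (g : Fin n → ℝ) (r : ℝ) (x y : Fin n → ℝ) (φ : Ω → ℝ) (α : ℝ) : ℝ :=
  g ⬝ᵥ x - g ⬝ᵥ y
    + α * Real.log (∫ ω, Real.exp (φ ω / α) * D.p (A y) ω ∂P)
    + α * Real.log (∫ ω, Real.exp (-φ ω / α) * D.p (A x) ω ∂P)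
    + 2 * α * r

/-- `Φ_*(r)` defined through the sup-inf value:
`2Φ_*(r) = sup_{x,y ∈ X} inf_{φ ∈ F, α > 0} Φ_r(x, y; φ, α)`. -/
noncomputable def PhiStarSI (D : GoodPair Ω P E) (A : (Fin n → ℝ) →ᵃ[ℝ] E)
    (g : Fin n → ℝ) (X : Set (Fin n → ℝ)) (r : ℝ) : ℝ :=
  (1/2) * sSup {v : ℝ | ∃ x ∈ X, ∃ y ∈ X,
    v = sInf {w : ℝ | ∃ φ ∈ D.F, ∃ α : ℝ, 0 < α ∧ w = PhiFun D A g r x y φ α}}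

/-- `Φ_*(r)` defined through the inf-sup value:
`2Φ_*(r) = inf_{φ ∈ F, α > 0} sup_{x,y ∈ X} Φ_r(x, y; φ, α)`. -/
noncomputable def PhiStarIS (D : GoodPair Ω P E) (A : (Fin n → ℝ) →ᵃ[ℝ] E)
    (g : Fin n → ℝ) (X : Set (Fin n → ℝ)) (r : ℝ) : ℝ :=
  (1/2) * sInf {v : ℝ | ∃ φ ∈ D.F, ∃ α : ℝ, 0 < α ∧
    v = sSup {w : ℝ | ∃ x ∈ X, ∃ y ∈ X, w = PhiFun D A g r x y φ α}}

/-!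
`F_φ(μ) = ln ∫ e^φ p_μ dP` is convex in `φ`, so its perspective `α F_{φ/α}(μ)` is jointly
convex in `(φ, α)`; concavity in `μ` is part of the definition of a good pair. A function convex on
an open finite-dimensional set in one variable and continuous in the other is jointly continuous,
and finite concave functions of `x ∈ A⁻¹(M)` are continuous, so `Φ_r` is continuous. Sion's theorem
with the compact side `X × X` then gives the saddle-point value. Convexity at the midpoint of `±φ`
yields `Φ_r(x, x; φ, α) ≥ 2αr ≥ 0`, so the inf-sup value is nonnegative and the saddle-point
identity survives the convention that a real infimum of an unbounded set is `0`.
-/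

open Function
open scoped Topology

section JointContinuity

variable {G T : Type*} [TopologicalSpace T] {C : Set G} {s : Set T} {f : G → T → ℝ}

lemma abs_le_of_convexOn_ball_of_le [NormedAddCommGroup G] [NormedSpace ℝ G] {h : G → ℝ} {e₀ : G}
    {R B : ℝ} (hconv : ConvexOn ℝ (Metric.ball e₀ R) h) (hB : ∀ e ∈ Metric.ball e₀ R, h e ≤ B)
    {e : G} (he : e ∈ Metric.ball e₀ R) : |h e| ≤ |B| + 2 * |h e₀| := by
  have hreflect : (2 : ℝ) • e₀ - e ∈ Metric.ball e₀ R := by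
    rw [mem_ball_iff_norm] at he ⊢
    rwa [show (2 : ℝ) • e₀ - e - e₀ = -(e - e₀) by module, norm_neg]
  have hmid := hconv.2 he hreflect one_half_pos.le one_half_pos.le (add_halves 1)
  rw [show (1 / 2 : ℝ) • e + (1 / 2 : ℝ) • ((2 : ℝ) • e₀ - e) = e₀ by module] at hmid
  simp only [smul_eq_mul] at hmid
  rw [abs_le]
  constructor <;> linarith [hB e he, hB _ hreflect, le_abs_self B, neg_abs_le (h e₀),
    abs_nonneg (h e₀)]

/-- Near `e₀` the values are dominated by those at the finitely many vertices of a simplex around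
`e₀`, and these vary continuously with `t`. -/
lemma exists_ball_eventually_le_of_convexOn [NormedAddCommGroup G] [NormedSpace ℝ G]
    [FiniteDimensional ℝ G] {e₀ : G} {t₀ : T} (hC : C ∈ 𝓝 e₀)
    (hconv : ∀ t ∈ s, ConvexOn ℝ C fun e => f e t)
    (hcont : ∀ e ∈ C, ContinuousWithinAt (f e) s t₀) :
    ∃ R > 0, Metric.ball e₀ R ⊆ C ∧
      ∃ B, ∀ᶠ t in 𝓝[s] t₀, ∀ e ∈ Metric.ball e₀ R, f e t ≤ B := by
  obtain ⟨b, he₀, hbC⟩ := exists_mem_interior_convexHull_affineBasis hC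
  obtain ⟨R, hR, hball⟩ := Metric.isOpen_iff.1 isOpen_interior e₀ he₀
  have hvertices : range b ⊆ C := (subset_convexHull ℝ _).trans hbC
  obtain ⟨B, hB⟩ := (finite_range fun i => f (b i) t₀).bddAbove
  have hle : ∀ᶠ t in 𝓝[s] t₀, ∀ i, f (b i) t ≤ B + 1 :=
    Filter.eventually_all.2 fun i => (hcont _ (hvertices ⟨i, rfl⟩)).eventually_le_const
      ((hB ⟨i, rfl⟩).trans_lt (lt_add_one B))
  refine ⟨R, hR, (hball.trans interior_subset).trans hbC, B + 1, ?_⟩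
  filter_upwards [hle, self_mem_nhdsWithin] with t ht hts e he
  obtain ⟨_, ⟨i, rfl⟩, hi⟩ :=
    (hconv t hts).exists_ge_of_mem_convexHull hvertices (interior_subset (hball he))
  exact hi.trans (ht i)

lemma continuousWithinAt_uncurry_of_convexOn [NormedAddCommGroup G] [NormedSpace ℝ G]
    [FiniteDimensional ℝ G] {e₀ : G} {t₀ : T} (hC : C ∈ 𝓝 e₀) (ht₀ : t₀ ∈ s)
    (hconv : ∀ t ∈ s, ConvexOn ℝ C fun e => f e t) (hcont : ∀ e ∈ C, ContinuousOn (f e) s) :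
    ContinuousWithinAt (uncurry f) (univ ×ˢ s) (e₀, t₀) := by
  obtain ⟨R, hR, hRC, B, hB⟩ :=
    exists_ball_eventually_le_of_convexOn hC hconv fun e he => hcont e he t₀ ht₀
  set K : ℝ := |B| + 2 * (|f e₀ t₀| + 1)
  have hcenter : ∀ᶠ t in 𝓝[s] t₀, |f e₀ t| ≤ |f e₀ t₀| + 1 :=
    (hcont e₀ (mem_of_mem_nhds hC) t₀ ht₀).abs.eventually_le_const (lt_add_one _)
  have hbound : ∀ᶠ t in 𝓝[s] t₀, ∀ e ∈ Metric.ball e₀ R, |f e t| ≤ K := by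
    filter_upwards [hB, hcenter, self_mem_nhdsWithin] with t ht hct hts e he
    have := abs_le_of_convexOn_ball_of_le ((hconv t hts).subset hRC (convex_ball _ _)) ht he
    linarith
  set u : Set T := {t ∈ s | ∀ e ∈ Metric.ball e₀ R, |f e t| ≤ K}
  have hu : u ∈ 𝓝[s] t₀ := Filter.inter_mem self_mem_nhdsWithin hbound
  have hhalf : Metric.ball e₀ (R - R / 2) ∈ 𝓝 e₀ := Metric.ball_mem_nhds _ (by linarith)
  have hjoint : ContinuousOn (uncurry f) (Metric.ball e₀ (R - R / 2) ×ˢ u) :=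
    continuousOn_prod_of_continuousOn_lipschitzOnWith _ (2 * K / (R / 2)).toNNReal
      (fun e he => (hcont e (hRC (Metric.ball_subset_ball (by linarith) he))).mono (sep_subset s _))
      fun t ht => ((hconv t ht.1).subset hRC (convex_ball _ _)).lipschitzOnWith_of_abs_le
        (half_pos hR) ht.2
  refine (hjoint (e₀, t₀) ⟨mem_of_mem_nhds hhalf,
    mem_of_mem_nhdsWithin ht₀ hu⟩).mono_of_mem_nhdsWithin ?_
  rw [nhdsWithin_prod_eq, nhdsWithin_univ]
  exact Filter.prod_mem_prod hhalf hu

lemma continuousOn_uncurry_of_convexOn [AddCommGroup G] [Module ℝ G] [TopologicalSpace G]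
    [IsTopologicalAddGroup G] [ContinuousSMul ℝ G] [T2Space G] [FiniteDimensional ℝ G]
    (hC : IsOpen C) (hconv : ∀ t ∈ s, ConvexOn ℝ C fun e => f e t)
    (hcont : ∀ e ∈ C, ContinuousOn (f e) s) :
    ContinuousOn (uncurry f) (C ×ˢ s) := by
  rintro ⟨e₀, t₀⟩ ⟨he₀, ht₀⟩
  let Λ : G ≃L[ℝ] EuclideanSpace ℝ (Fin (Module.finrank ℝ G)) := toEuclidean
  have hnormed : ContinuousWithinAt (uncurry fun v t => f (Λ.symm v) t) (univ ×ˢ s) (Λ e₀, t₀) :=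
    continuousWithinAt_uncurry_of_convexOn
      ((hC.preimage Λ.symm.continuous).mem_nhds (by simpa using he₀)) ht₀
      (fun t ht => (hconv t ht).comp_linearMap Λ.symm.toLinearMap) fun v hv => hcont _ hv
  have hΛ : Continuous fun q : G × T => (Λ q.1, q.2) := by fun_prop
  have hcomp := hnormed.comp (f := fun q : G × T => (Λ q.1, q.2)) (x := (e₀, t₀)) (s := C ×ˢ s)
    hΛ.continuousWithinAt fun q hq => ⟨mem_univ _, hq.2⟩
  simpa [comp_def, uncurry_def] using hcomp

end JointContinuity

lemma convexOn_perspective {G : Type*} [AddCommGroup G] [Module ℝ G] {C : Set G} {f : G → ℝ}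
    (hf : ConvexOn ℝ C f) :
    ConvexOn ℝ {q : G × ℝ | 0 < q.2 ∧ q.2⁻¹ • q.1 ∈ C} fun q => q.2 * f (q.2⁻¹ • q.1) := by
  have hweights {α β a b : ℝ} (hα : 0 < α) (hβ : 0 < β) (ha : 0 ≤ a) (hb : 0 ≤ b)
      (hab : a + b = 1) : 0 < a * α + b * β ∧
        a * α / (a * α + b * β) + b * β / (a * α + b * β) = 1 := by
    have hpos : 0 < a * α + b * β := convex_Ioi (0 : ℝ) hα hβ ha hb hab
    exact ⟨hpos, by rw [← add_div, div_self hpos.ne']⟩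
  have hcombo {φ ψ : G} {α β a b : ℝ} (hα : 0 < α) (hβ : 0 < β) :
      (a * α + b * β)⁻¹ • (a • φ + b • ψ) =
        (a * α / (a * α + b * β)) • α⁻¹ • φ + (b * β / (a * α + b * β)) • β⁻¹ • ψ := by
    match_scalars <;> field_simp
  refine ⟨?_, ?_⟩ <;> rintro ⟨φ, α⟩ ⟨hα, hφ⟩ ⟨ψ, β⟩ ⟨hβ, hψ⟩ a b ha hb hab <;>
    dsimp only at hα hβ hφ hψ <;> obtain ⟨hpos, hsum⟩ := hweights hα hβ ha hb hab
  · refine ⟨hpos, ?_⟩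
    change (a * α + b * β)⁻¹ • (a • φ + b • ψ) ∈ C
    rw [hcombo hα hβ]
    exact hf.1 hφ hψ (by positivity) (by positivity) hsum
  · have hle := hf.2 hφ hψ (by positivity) (by positivity) hsum
    rw [← hcombo hα hβ] at hle
    calc (a * α + b * β) * f ((a * α + b * β)⁻¹ • (a • φ + b • ψ))
        ≤ (a * α + b * β) * (a * α / (a * α + b * β) * f (α⁻¹ • φ) +
            b * β / (a * α + b * β) * f (β⁻¹ • ψ)) := mul_le_mul_of_nonneg_left hle hpos.le
      _ = a * (α * f (α⁻¹ • φ)) + b * (β * f (β⁻¹ • ψ)) := by field_simp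

section LogIntegralExp

variable {α : Type*} [MeasurableSpace α] {ν : Measure α}

lemma exp_combo_le {a b : ℝ} (ha : 0 ≤ a) (hb : 0 ≤ b) (hab : a + b = 1) (x y : ℝ) :
    exp (a * x + b * y) ≤ a * exp x + b * exp y :=
  convexOn_exp.2 (mem_univ x) (mem_univ y) ha hb hab

lemma convex_setOf_integrable_exp :
    Convex ℝ {φ : α → ℝ | Integrable (fun ω => exp (φ ω)) ν} := by
  intro φ hφ ψ hψ a b ha hb hab
  have hφ_meas := aemeasurable_of_aemeasurable_exp hφ.aemeasurable
  have hψ_meas := aemeasurable_of_aemeasurable_exp hψ.aemeasurable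
  refine ((hφ.const_mul a).add (hψ.const_mul b)).mono'
    (((hφ_meas.const_smul a).add (hψ_meas.const_smul b)).exp.aestronglyMeasurable)
    (.of_forall fun ω => ?_)
  rw [norm_of_nonneg (exp_nonneg _)]
  exact exp_combo_le ha hb hab _ _

lemma integral_exp_sub_log_integral_exp [NeZero ν] {φ : α → ℝ}
    (hφ : Integrable (fun ω => exp (φ ω)) ν) :
    ∫ ω, exp (φ ω - log (∫ ω, exp (φ ω) ∂ν)) ∂ν = 1 := by
  simp_rw [exp_sub, exp_log (integral_exp_pos hφ), integral_div]
  exact div_self (integral_exp_pos hφ).ne'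

/-- After normalising `∫ exp φ = ∫ exp ψ = 1`, this is the pointwise convexity of `exp`,
integrated. -/
lemma convexOn_log_integral_exp :
    ConvexOn ℝ {φ : α → ℝ | Integrable (fun ω => exp (φ ω)) ν}
      fun φ => log (∫ ω, exp (φ ω) ∂ν) := by
  rcases eq_zero_or_neZero ν with rfl | _
  · simpa using convexOn_const (0 : ℝ) convex_univ
  refine ⟨convex_setOf_integrable_exp, fun φ hφ ψ hψ a b ha hb hab => ?_⟩
  have hcombo := convex_setOf_integrable_exp hφ hψ ha hb hab
  set c := log (∫ ω, exp (φ ω) ∂ν) with hc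
  set d := log (∫ ω, exp (ψ ω) ∂ν) with hd
  have hφ_int : Integrable (fun ω => exp (φ ω - c)) ν := by
    simpa only [exp_sub] using hφ.div_const _
  have hψ_int : Integrable (fun ω => exp (ψ ω - d)) ν := by
    simpa only [exp_sub] using hψ.div_const _
  have hpointwise (ω : α) : exp ((a • φ + b • ψ) ω) ≤
      exp (a * c + b * d) * (a * exp (φ ω - c) + b * exp (ψ ω - d)) := by
    calc exp ((a • φ + b • ψ) ω)
        = exp (a * c + b * d) * exp (a * (φ ω - c) + b * (ψ ω - d)) := by
          rw [← exp_add]; congr 1; simp only [Pi.add_apply, Pi.smul_apply, smul_eq_mul]; ring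
      _ ≤ _ := by gcongr; exact exp_combo_le ha hb hab _ _
  change log (∫ ω, exp ((a • φ + b • ψ) ω) ∂ν) ≤ a * c + b * d
  rw [log_le_iff_le_exp (integral_exp_pos hcombo)]
  calc ∫ ω, exp ((a • φ + b • ψ) ω) ∂ν
      ≤ ∫ ω, exp (a * c + b * d) * (a * exp (φ ω - c) + b * exp (ψ ω - d)) ∂ν :=
        integral_mono hcombo
          (((hφ_int.const_mul a).add (hψ_int.const_mul b)).const_mul _) hpointwise
    _ = exp (a * c + b * d) := by
        rw [integral_const_mul, integral_add (hφ_int.const_mul a) (hψ_int.const_mul b),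
          integral_const_mul, integral_const_mul, hc, hd, integral_exp_sub_log_integral_exp hφ,
          integral_exp_sub_log_integral_exp hψ, mul_one, mul_one, hab, mul_one]

end LogIntegralExp

section Minimax

/-- An infimum that is really `-∞` has the junk value `0`; nonnegativity of the inf-sup value keeps
it from exceeding the supremum. -/
lemma iInf_le_iInf_iSup_of_nonneg {ι κ : Type*} {X : Set ι} {Y : Set κ} {f : ι → κ → ℝ}
    (hYne : Y.Nonempty) (hbdd : ∀ q ∈ Y, BddAbove (range fun z : X => f z q))
    (hnonneg : ∀ q : Y, 0 ≤ ⨆ z : X, f z q) (z : X) :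
    ⨅ q : Y, f z q ≤ ⨅ q : Y, ⨆ z : X, f z q := by
  have := hYne.to_subtype
  by_cases hbelow : BddBelow (range fun q : Y => f z q)
  · exact ciInf_mono hbelow fun q => le_ciSup (hbdd q q.2) z
  · rw [iInf_of_not_bddBelow hbelow]
    exact iInf_nonneg hnonneg

variable {G H : Type*}
  [AddCommGroup G] [Module ℝ G] [TopologicalSpace G] [IsTopologicalAddGroup G] [ContinuousSMul ℝ G]
  [AddCommGroup H] [Module ℝ H] [TopologicalSpace H] [IsTopologicalAddGroup H] [ContinuousSMul ℝ H]
  {X : Set G} {Y : Set H}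

lemma exists_forall_le_of_forall_exists_le {β : Type*} [LinearOrder β] [DenselyOrdered β]
    {f : G → H → β} {v : β} (hXne : X.Nonempty) (hXcp : IsCompact X) (hXcv : Convex ℝ X)
    (hYcv : Convex ℝ Y)
    (husc : ∀ q ∈ Y, UpperSemicontinuousOn (fun z => f z q) X)
    (hconc : ∀ q ∈ Y, QuasiconcaveOn ℝ X fun z => f z q)
    (hlsc : ∀ z ∈ X, LowerSemicontinuousOn (f z) Y)
    (hconv : ∀ z ∈ X, QuasiconvexOn ℝ Y (f z))
    (hv : ∀ q ∈ Y, ∃ z ∈ X, v ≤ f z q) :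
    ∃ z ∈ X, ∀ q ∈ Y, v ≤ f z q := by
  by_contra! hlt
  choose! q hqY hq using hlt
  obtain ⟨t, htX, hcover⟩ := hXcp.elim_nhdsWithin_subcover (fun z => {z' | f z' (q z) < v})
    fun z hz => husc (q z) (hqY z hz) z hz v (hq z hz)
  obtain ⟨q₀, hq₀, hq₀_lt⟩ := Sion.exists_lt_iInf_of_lt_iInf_of_finite (β := βᵒᵈ)
    (f := fun z q => OrderDual.toDual (f z q)) hXne hXcp husc hconc hYcv hlsc hconv hXcv
    (t.finite_toSet.image q) (image_subset_iff.2 fun z hz => hqY z (htX z hz))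
    (t := OrderDual.toDual v) fun z hz => by
      obtain ⟨w, hw, hzw⟩ := mem_iUnion₂.1 (hcover hz)
      exact ⟨q w, mem_image_of_mem q hw, hzw⟩
  obtain ⟨z, hz, hvz⟩ := hv q₀ hq₀
  exact hvz.not_gt (hq₀_lt z hz)

theorem iSup_iInf_eq_iInf_iSup_of_nonneg {f : G → H → ℝ} (hXcp : IsCompact X) (hXcv : Convex ℝ X)
    (hYne : Y.Nonempty) (hYcv : Convex ℝ Y)
    (hcontX : ∀ q ∈ Y, ContinuousOn (fun z => f z q) X)
    (hconc : ∀ q ∈ Y, ConcaveOn ℝ X fun z => f z q)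
    (hcontY : ∀ z ∈ X, ContinuousOn (f z) Y)
    (hconv : ∀ z ∈ X, ConvexOn ℝ Y (f z))
    (hnonneg : ∀ q ∈ Y, ∃ z ∈ X, 0 ≤ f z q) :
    ⨆ z : X, ⨅ q : Y, f z q = ⨅ q : Y, ⨆ z : X, f z q := by
  have hXne : X.Nonempty := hYne.elim fun q hq => (hnonneg q hq).imp fun _ => And.left
  have := hXne.to_subtype
  have := hYne.to_subtype
  have hbdd (q) (hq : q ∈ Y) : BddAbove (range fun z : X => f z q) := by
    simpa only [image_eq_range] using hXcp.bddAbove_image (hcontX q hq)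
  have hsup_nonneg (q : Y) : 0 ≤ ⨆ z : X, f z q :=
    let ⟨z, hz, hzq⟩ := hnonneg q q.2
    hzq.trans (le_ciSup (hbdd q q.2) ⟨z, hz⟩)
  have hweak := iInf_le_iInf_iSup_of_nonneg hYne hbdd hsup_nonneg
  obtain ⟨z, hz, hzv⟩ : ∃ z ∈ X, ∀ q ∈ Y, ⨅ q : Y, ⨆ z : X, f z q ≤ f z q := by
    refine exists_forall_le_of_forall_exists_le hXne hXcp hXcv hYcv
      (fun q hq => (hcontX q hq).upperSemicontinuousOn) (fun q hq => (hconc q hq).quasiconcaveOn)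
      (fun z hz => (hcontY z hz).lowerSemicontinuousOn) (fun z hz => (hconv z hz).quasiconvexOn)
      fun q hq => ?_
    obtain ⟨z, hz, hmax⟩ := hXcp.exists_isMaxOn hXne (hcontX q hq)
    exact ⟨z, hz, (ciInf_le ⟨0, forall_mem_range.2 hsup_nonneg⟩ ⟨q, hq⟩).trans
      (ciSup_le fun w => hmax w.2)⟩
  exact le_antisymm (ciSup_le hweak)
    (le_ciSup_of_le ⟨_, forall_mem_range.2 hweak⟩ ⟨z, hz⟩ (le_ciInf fun q => hzv q q.2))

end Minimax

namespace GoodPair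

/-- The paper's `F_φ(μ) = ln ∫ e^φ p_μ dP`, the building block of `Φ_r`. It is a junk value unless
`μ ∈ M` and `e^φ p_μ` is integrable, as it is for `φ ∈ F`. -/
noncomputable def logMGF (D : GoodPair Ω P E) (φ : Ω → ℝ) (μ : E) : ℝ :=
  log (∫ ω, exp (φ ω) * D.p μ ω ∂P)

variable (D : GoodPair Ω P E) {μ : E}

lemma convexOn_logMGF (hμ : μ ∈ D.M) : ConvexOn ℝ univ fun φ : D.F => D.logMGF φ μ := by
  have hexp (φ : Ω → ℝ) (ω : Ω) : exp (log (D.p μ ω) + φ ω) = exp (φ ω) * D.p μ ω := by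
    rw [exp_add, exp_log (D.p_pos μ hμ ω), mul_comm]
  have hconv := ((convexOn_log_integral_exp (ν := P)).translate_right
    fun ω => log (D.p μ ω)).comp_linearMap D.F.subtype
  refine (hconv.subset (fun φ _ => ?_) convex_univ).congr fun φ _ => ?_
  · simpa [hexp] using D.F_finite φ φ.2 μ hμ
  · simp [logMGF, hexp]

lemma logMGF_zero (hμ : μ ∈ D.M) : D.logMGF 0 μ = 0 := by
  simp [logMGF, D.p_prob μ hμ]

lemma logMGF_add_logMGF_neg_nonneg (φ : D.F) (hμ : μ ∈ D.M) :
    0 ≤ D.logMGF φ μ + D.logMGF (-φ : D.F) μ := by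
  have hmid := (D.convexOn_logMGF hμ).2 (mem_univ φ) (mem_univ (-φ))
    one_half_pos.le one_half_pos.le (add_halves 1)
  rw [smul_neg, add_neg_cancel] at hmid
  simp only [smul_eq_mul, ZeroMemClass.coe_zero, D.logMGF_zero hμ] at hmid
  linarith

variable {V : Type*} [NormedAddCommGroup V] [NormedSpace ℝ V] [FiniteDimensional ℝ V]

lemma continuousOn_logMGF_affineMap (A : V →ᵃ[ℝ] E) :
    ContinuousOn (fun q : D.F × V => D.logMGF q.1 (A q.2)) (univ ×ˢ (A ⁻¹' D.M)) := by
  have := D.F_fd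
  exact continuousOn_uncurry_of_convexOn (f := fun (φ : D.F) x => D.logMGF φ (A x)) isOpen_univ
    (fun x hx => D.convexOn_logMGF hx) fun φ _ =>
      ((D.F_concave φ φ.2).comp_affineMap A).continuousOn
        (D.M_open.preimage A.continuous_of_finiteDimensional)

lemma continuousOn_logMGF_comp {A : V →ᵃ[ℝ] E} {T : Type*} [TopologicalSpace T] {S : Set T}
    {ψ : T → D.F} {w : T → V} (hψ : ContinuousOn ψ S) (hw : ContinuousOn w S)
    (hwM : ∀ t ∈ S, A (w t) ∈ D.M) :
    ContinuousOn (fun t => D.logMGF (ψ t) (A (w t))) S :=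
  (D.continuousOn_logMGF_affineMap A).comp (hψ.prodMk hw) fun t ht => ⟨mem_univ _, hwM t ht⟩

end GoodPair

section PhiFun

variable (D : GoodPair Ω P E) {X : Set (Fin n → ℝ)} {A : (Fin n → ℝ) →ᵃ[ℝ] E} (g : Fin n → ℝ)
  (r : ℝ)

lemma PhiFun_eq_logMGF (A : (Fin n → ℝ) →ᵃ[ℝ] E) (x y : Fin n → ℝ) (φ : D.F) (α : ℝ) :
    PhiFun D A g r x y φ α = g ⬝ᵥ x - g ⬝ᵥ y + α * D.logMGF (α⁻¹ • φ : D.F) (A y)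
      + α * D.logMGF (α⁻¹ • -φ : D.F) (A x) + 2 * α * r := by
  simp [PhiFun, GoodPair.logMGF, div_eq_inv_mul]

lemma continuousOn_PhiFun (hA : ∀ x ∈ X, A x ∈ D.M) :
    ContinuousOn
      (fun q : ((Fin n → ℝ) × (Fin n → ℝ)) × (D.F × ℝ) => PhiFun D A g r q.1.1 q.1.2 q.2.1 q.2.2)
      ((X ×ˢ X) ×ˢ (univ ×ˢ Ioi 0)) := by
  simp only [PhiFun_eq_logMGF]
  have hinv : ContinuousOn (fun q : ((Fin n → ℝ) × (Fin n → ℝ)) × (D.F × ℝ) => q.2.2⁻¹)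
      ((X ×ˢ X) ×ˢ (univ ×ˢ Ioi 0)) :=
    ContinuousOn.inv₀ (by fun_prop) fun q hq => ne_of_gt hq.2.2
  have hy := D.continuousOn_logMGF_comp (A := A) (S := (X ×ˢ X) ×ˢ (univ ×ˢ Ioi 0))
    (ψ := fun q : ((Fin n → ℝ) × (Fin n → ℝ)) × (D.F × ℝ) => q.2.2⁻¹ • q.2.1)
    (w := fun q => q.1.2) (by fun_prop) (by fun_prop) fun q hq => hA _ hq.1.2
  have hx := D.continuousOn_logMGF_comp (A := A) (S := (X ×ˢ X) ×ˢ (univ ×ˢ Ioi 0))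
    (ψ := fun q : ((Fin n → ℝ) × (Fin n → ℝ)) × (D.F × ℝ) => q.2.2⁻¹ • -q.2.1)
    (w := fun q => q.1.1) (by fun_prop) (by fun_prop) fun q hq => hA _ hq.1.1
  fun_prop

lemma concaveOn_PhiFun (hXcv : Convex ℝ X) (hA : ∀ x ∈ X, A x ∈ D.M) (φ : D.F) {α : ℝ}
    (hα : 0 ≤ α) :
    ConcaveOn ℝ (X ×ˢ X)
      fun q : (Fin n → ℝ) × (Fin n → ℝ) => PhiFun D A g r q.1 q.2 φ α := by
  simp only [PhiFun_eq_logMGF]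
  have hconc (ψ : D.F) : ConcaveOn ℝ X fun x => α * D.logMGF ψ (A x) :=
    (((D.F_concave ψ ψ.2).comp_affineMap A).subset hA hXcv).smul hα
  have hX2 : Convex ℝ (X ×ˢ X) := hXcv.prod hXcv
  have hy := ((hconc (α⁻¹ • φ)).comp_linearMap (LinearMap.snd ℝ (Fin n → ℝ) (Fin n → ℝ))).subset
    (fun q (hq : q ∈ X ×ˢ X) => hq.2) hX2
  have hx := ((hconc (α⁻¹ • -φ)).comp_linearMap (LinearMap.fst ℝ (Fin n → ℝ) (Fin n → ℝ))).subset
    (fun q (hq : q ∈ X ×ˢ X) => hq.1) hX2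
  have hlin := (dotProductBilin ℝ ℝ g ∘ₗ
    (LinearMap.fst ℝ (Fin n → ℝ) (Fin n → ℝ) - LinearMap.snd ℝ _ _)).concaveOn hX2
  refine (((hlin.add hy).add hx).add (concaveOn_const (2 * α * r) hX2)).congr fun q _ => ?_
  simp [dotProduct_sub]

lemma convexOn_PhiFun {x y : Fin n → ℝ} (hx : A x ∈ D.M) (hy : A y ∈ D.M) :
    ConvexOn ℝ {q : D.F × ℝ | 0 < q.2} fun q => PhiFun D A g r x y q.1 q.2 := by
  simp only [PhiFun_eq_logMGF]
  have hpersp {μ : E} (hμ : μ ∈ D.M) : ConvexOn ℝ {q : D.F × ℝ | 0 < q.2}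
      fun q => q.2 * D.logMGF (q.2⁻¹ • q.1 : D.F) μ := by
    simpa using convexOn_perspective (D.convexOn_logMGF hμ)
  have hneg := (hpersp hx).comp_linearMap
    ((-LinearMap.id : D.F →ₗ[ℝ] D.F).prodMap (LinearMap.id : ℝ →ₗ[ℝ] ℝ))
  have hlin := ((2 * r) • LinearMap.snd ℝ D.F ℝ).convexOn hneg.1
  refine ((((convexOn_const (g ⬝ᵥ x - g ⬝ᵥ y) hneg.1).add (hpersp hy)).add hneg).add
    hlin).congr fun q _ => ?_
  simp [mul_right_comm]

variable {r} in
lemma PhiFun_self_nonneg (hr : 0 ≤ r) {x : Fin n → ℝ} (hx : A x ∈ D.M) (φ : D.F) {α : ℝ}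
    (hα : 0 ≤ α) : 0 ≤ PhiFun D A g r x x φ α := by
  rw [PhiFun_eq_logMGF, smul_neg]
  have := mul_nonneg hα (D.logMGF_add_logMGF_neg_nonneg (α⁻¹ • φ) hx)
  linarith [mul_nonneg hα hr]

lemma PhiStarSI_eq_iSup_iInf (X : Set (Fin n → ℝ)) (A : (Fin n → ℝ) →ᵃ[ℝ] E) :
    PhiStarSI D A g X r = 1 / 2 * ⨆ z : X ×ˢ X, ⨅ q : {q : D.F × ℝ | 0 < q.2},
      PhiFun D A g r z.1.1 z.1.2 q.1.1 q.1.2 := by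
  simp [PhiStarSI, iSup, iInf, range, eq_comm, and_assoc]

lemma PhiStarIS_eq_iInf_iSup (X : Set (Fin n → ℝ)) (A : (Fin n → ℝ) →ᵃ[ℝ] E) :
    PhiStarIS D A g X r = 1 / 2 * ⨅ q : {q : D.F × ℝ | 0 < q.2}, ⨆ z : X ×ˢ X,
      PhiFun D A g r z.1.1 z.1.2 q.1.1 q.1.2 := by
  simp [PhiStarIS, iSup, iInf, range, eq_comm, and_assoc]

end PhiFun

theorem phi_saddle_general (D : GoodPair Ω P E) (X : Set (Fin n → ℝ)) (hXne : X.Nonempty)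
    (hXcp : IsCompact X) (hXcv : Convex ℝ X) (A : (Fin n → ℝ) →ᵃ[ℝ] E)
    (hA : ∀ x ∈ X, A x ∈ D.M) (g : Fin n → ℝ) (r : ℝ) (hr : 0 ≤ r) :
    ContinuousOn
      (fun q : ((Fin n → ℝ) × (Fin n → ℝ)) × (D.F × ℝ) =>
        PhiFun D A g r q.1.1 q.1.2 (q.2.1 : Ω → ℝ) q.2.2)
      ((X ×ˢ X) ×ˢ ((Set.univ : Set D.F) ×ˢ Set.Ioi (0 : ℝ)))
    ∧ (∀ φ ∈ D.F, ∀ α : ℝ, 0 < α →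
        ConcaveOn ℝ (X ×ˢ X)
          (fun q : (Fin n → ℝ) × (Fin n → ℝ) => PhiFun D A g r q.1 q.2 φ α))
    ∧ (∀ x ∈ X, ∀ y ∈ X,
        ConvexOn ℝ {q : D.F × ℝ | 0 < q.2}
          (fun q : D.F × ℝ => PhiFun D A g r x y (q.1 : Ω → ℝ) q.2))
    ∧ PhiStarSI D A g X r = PhiStarIS D A g X r := by
  have hcont := continuousOn_PhiFun D g r hA
  have hconc (φ : D.F) {α : ℝ} (hα : 0 < α) := concaveOn_PhiFun D g r hXcv hA φ hα.le
  have hconv {x y} (hx : x ∈ X) (hy : y ∈ X) := convexOn_PhiFun D g r (hA x hx) (hA y hy)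
  refine ⟨hcont, fun φ hφ α hα => hconc ⟨φ, hφ⟩ hα, fun x hx y hy => hconv hx hy, ?_⟩
  obtain ⟨x₀, hx₀⟩ := hXne
  rw [PhiStarSI_eq_iSup_iInf, PhiStarIS_eq_iInf_iSup]
  congr 1
  exact iSup_iInf_eq_iInf_iSup_of_nonneg
    (f := fun (z : (Fin n → ℝ) × (Fin n → ℝ)) (q : D.F × ℝ) => PhiFun D A g r z.1 z.2 q.1 q.2)
    (hXcp.prod hXcp) (hXcv.prod hXcv) ⟨(0, 1), show (0 : ℝ) < 1 from one_pos⟩ (hconv hx₀ hx₀).1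
    (fun q hq => hcont.comp (f := fun z => (z, q)) (by fun_prop) fun z hz => ⟨hz, mem_univ _, hq⟩)
    (fun q hq => hconc q.1 hq)
    (fun z hz => hcont.comp (f := fun q => (z, q)) (by fun_prop) fun q hq => ⟨hz, mem_univ _, hq⟩)
    (fun z hz => hconv hz.1 hz.2)
    fun q hq => ⟨(x₀, x₀), ⟨hx₀, hx₀⟩, PhiFun_self_nonneg D g hr (hA x₀ hx₀) q.1 hq.le⟩

/-- The function `Φ_r` is a continuous real-valued function on
`(X × X) × (F × (0,∞))`, concave in `(x, y) ∈ X × X`, convex in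
`(φ, α) ∈ F × (0,∞)`, and possesses a well-defined saddle-point value:
`sup_{x,y∈X} inf_{φ∈F, α>0} Φ_r = inf_{φ∈F, α>0} sup_{x,y∈X} Φ_r`. -/
theorem phi_saddle
    {Ω : Type*} [MeasurableSpace Ω] [TopologicalSpace Ω] [PolishSpace Ω] [BorelSpace Ω]
    {P : Measure Ω} [SigmaFinite P] {m n : ℕ}
    (D : GoodPair Ω P (Fin m → ℝ))
    (X : Set (Fin n → ℝ)) (hXne : X.Nonempty) (hXcp : IsCompact X) (hXcv : Convex ℝ X)
    (A : (Fin n → ℝ) →ᵃ[ℝ] (Fin m → ℝ)) (hA : ∀ x ∈ X, A x ∈ D.M)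
    (g : Fin n → ℝ) (r : ℝ) (hr : 0 ≤ r) :
    ContinuousOn
      (fun q : ((Fin n → ℝ) × (Fin n → ℝ)) × (D.F × ℝ) =>
        PhiFun D A g r q.1.1 q.1.2 (q.2.1 : Ω → ℝ) q.2.2)
      ((X ×ˢ X) ×ˢ ((Set.univ : Set D.F) ×ˢ Set.Ioi (0 : ℝ)))
    ∧ (∀ φ ∈ D.F, ∀ α : ℝ, 0 < α →
        ConcaveOn ℝ (X ×ˢ X)
          (fun q : (Fin n → ℝ) × (Fin n → ℝ) => PhiFun D A g r q.1 q.2 φ α))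
    ∧ (∀ x ∈ X, ∀ y ∈ X,
        ConvexOn ℝ {q : D.F × ℝ | 0 < q.2}
          (fun q : D.F × ℝ => PhiFun D A g r x y (q.1 : Ω → ℝ) q.2))
    ∧ PhiStarSI D A g X r = PhiStarIS D A g X r :=
  phi_saddle_general D X hXne hXcp hXcv A hA g r hr
end

section
/- Let (D, F) be a good pair, X ⊆ ℝⁿ convex compact, A affine with A(X) ⊆ M, g ∈ ℝⁿ. Define 2Φ_*(r) = inf_{φ∈F, α>0} sup_{x,y∈X} Φ_r(x, y; φ, α) for r ≥ 0. Then Φ_*(r) is nonnegative and concave as a function of r on [0, ∞). -/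
open MeasureTheory Real Matrix Set
open scoped ENNReal

variable {Ω : Type*} [MeasurableSpace Ω] {P : Measure Ω}
  {E : Type*} [NormedAddCommGroup E] [NormedSpace ℝ E] {n : ℕ}

/-!
For fixed `(φ, α)` the shift `r` enters `Φ_r` only through the summand `2 α r`, so
`sup_{x,y} Φ_r` is affine in `r`, and `Φ_*` is concave as an infimum of affine functions. The
suprema are finite because `x ↦ F_φ(A x)` is concave on an open set of a finite-dimensional space,
hence continuous, and `X` is compact. They are nonnegative because on the diagonal `x = y` the two
logarithms sum to at least `0`: by Cauchy–Schwarz, `1 = (∫ p_μ)² ≤ (∫ e^φ p_μ) (∫ e^{-φ} p_μ)`.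
-/

theorem concaveOn_ciInf {𝕜 V β ι : Type*} [Semiring 𝕜] [PartialOrder 𝕜] [AddCommMonoid V]
    [SMul 𝕜 V] [ConditionallyCompleteLattice β] [AddCommMonoid β] [IsOrderedAddMonoid β]
    [SMul 𝕜 β] [PosSMulMono 𝕜 β] [Nonempty ι] {s : Set V} {f : ι → V → β}
    (hf : ∀ i, ConcaveOn 𝕜 s (f i)) (hbdd : ∀ x ∈ s, BddBelow (range fun i => f i x)) :
    ConcaveOn 𝕜 s fun x => ⨅ i, f i x := by
  refine ⟨(hf (Classical.arbitrary ι)).1, fun x hx y hy a b ha hb hab => le_ciInf fun i => ?_⟩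
  calc a • (⨅ i, f i x) + b • (⨅ i, f i y) ≤ a • f i x + b • f i y := by
        gcongr
        exacts [ciInf_le (hbdd x hx) i, ciInf_le (hbdd y hy) i]
    _ ≤ f i (a • x + b • y) := (hf i).2 hx hy ha hb hab

theorem sq_integral_le_integral_mul_integral {S : Type*} [MeasurableSpace S] {μ : Measure S}
    {u v w : S → ℝ} (hu : Integrable u μ) (hv : Integrable v μ) (hw : Integrable w μ)
    (hu_nonneg : 0 ≤ᵐ[μ] u) (hv_nonneg : 0 ≤ᵐ[μ] v) (hwuv : ∀ᵐ s ∂μ, w s ^ 2 ≤ u s * v s) :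
    (∫ s, w s ∂μ) ^ 2 ≤ (∫ s, u s ∂μ) * ∫ s, v s ∂μ := by
  have hquad (t : ℝ) :
      0 ≤ (∫ s, u s ∂μ) * (t * t) + (2 * ∫ s, w s ∂μ) * t + ∫ s, v s ∂μ := by
    have hpointwise : ∀ᵐ s ∂μ, 0 ≤ u s * (t * t) + 2 * w s * t + v s := by
      filter_upwards [hu_nonneg, hv_nonneg, hwuv] with s hus hvs hws
      have hsum : 0 ≤ u s * (t * t) + v s :=
        add_nonneg (mul_nonneg hus (mul_self_nonneg t)) hvs
      have hsq : (2 * w s * t) ^ 2 ≤ (u s * (t * t) + v s) ^ 2 := by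
        nlinarith [sq_nonneg (u s * (t * t) - v s), mul_le_mul_of_nonneg_right hws (sq_nonneg t)]
      linarith [(abs_le.mp (abs_le_of_sq_le_sq hsq hsum)).1]
    have hut := hu.mul_const (t * t)
    have hwt := (hw.const_mul 2).mul_const t
    have huwt : Integrable (fun s => u s * (t * t) + 2 * w s * t) μ := hut.add hwt
    calc 0 ≤ ∫ s, (u s * (t * t) + 2 * w s * t + v s) ∂μ := integral_nonneg_of_ae hpointwise
      _ = _ := by
        rw [integral_add huwt hv, integral_add hut hwt, integral_mul_const,
          integral_mul_const, integral_const_mul]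
  have hdiscrim := discrim_le_zero hquad
  rw [discrim] at hdiscrim
  linarith

namespace GoodPair

/-- The function `F_φ(μ) = ln ∫ e^φ p_μ dP` whose concavity in `μ` is required of a good pair. -/
noncomputable def logExpMoment (D : GoodPair Ω P E) (φ : Ω → ℝ) (μ : E) : ℝ :=
  Real.log (∫ ω, Real.exp (φ ω) * D.p μ ω ∂P)

variable (D : GoodPair Ω P E) {φ : Ω → ℝ} {μ : E}

theorem integrable_p (hμ : μ ∈ D.M) : Integrable (D.p μ) P := by
  simpa using D.F_finite 0 D.F.zero_mem μ hμ

theorem one_le_integral_exp_mul_integral_exp_neg (hφ : φ ∈ D.F) (hμ : μ ∈ D.M) :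
    1 ≤ (∫ ω, Real.exp (φ ω) * D.p μ ω ∂P) * ∫ ω, Real.exp (-φ ω) * D.p μ ω ∂P := by
  have hexp_nonneg (ψ : Ω → ℝ) (ω : Ω) : 0 ≤ Real.exp (ψ ω) * D.p μ ω :=
    mul_nonneg (Real.exp_nonneg _) (D.p_pos μ hμ ω).le
  have hprod (ω : Ω) :
      D.p μ ω ^ 2 = Real.exp (φ ω) * D.p μ ω * (Real.exp (-φ ω) * D.p μ ω) := by
    rw [Real.exp_neg]
    field_simp
  simpa only [D.p_prob μ hμ, one_pow, Pi.neg_apply] using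
    sq_integral_le_integral_mul_integral (D.F_finite φ hφ μ hμ)
      (D.F_finite (-φ) (D.F.neg_mem hφ) μ hμ) (D.integrable_p hμ)
      (.of_forall (hexp_nonneg φ)) (.of_forall (hexp_nonneg (-φ)))
      (.of_forall fun ω => (hprod ω).le)

theorem logExpMoment_add_logExpMoment_neg_nonneg (hφ : φ ∈ D.F) (hμ : μ ∈ D.M) :
    0 ≤ D.logExpMoment φ μ + D.logExpMoment (-φ) μ := by
  have hmul := D.one_le_integral_exp_mul_integral_exp_neg hφ hμ
  have hne := mul_ne_zero_iff.mp (zero_lt_one.trans_le hmul).ne'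
  calc 0 ≤ Real.log ((∫ ω, Real.exp (φ ω) * D.p μ ω ∂P) *
        ∫ ω, Real.exp (-φ ω) * D.p μ ω ∂P) := Real.log_nonneg hmul
    _ = D.logExpMoment φ μ + D.logExpMoment (-φ) μ := Real.log_mul hne.1 hne.2

theorem continuousOn_logExpMoment_comp {V : Type*} [NormedAddCommGroup V] [NormedSpace ℝ V]
    [FiniteDimensional ℝ V] (A : V →ᵃ[ℝ] E) (hφ : φ ∈ D.F) :
    ContinuousOn (fun x => D.logExpMoment φ (A x)) (A ⁻¹' D.M) :=
  ((D.F_concave φ hφ).comp_affineMap A).continuousOn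
    (D.M_open.preimage A.continuous_of_finiteDimensional)

end GoodPair

/-- The worst case `sup_{x,y ∈ X} Φ_r(x, y; φ, α)`, with `r` last so that it can be studied as a
function of `r`. -/
noncomputable def supPhiFun (D : GoodPair Ω P E) (A : (Fin n → ℝ) →ᵃ[ℝ] E) (g : Fin n → ℝ)
    (X : Set (Fin n → ℝ)) (φ : Ω → ℝ) (α r : ℝ) : ℝ :=
  ⨆ z : X × X, PhiFun D A g r z.1 z.2 φ α

section Phi

variable (D : GoodPair Ω P E) (A : (Fin n → ℝ) →ᵃ[ℝ] E) (g : Fin n → ℝ)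

theorem phiFun_eq_logExpMoment (r : ℝ) (x y : Fin n → ℝ) (φ : Ω → ℝ) (α : ℝ) :
    PhiFun D A g r x y φ α = g ⬝ᵥ x - g ⬝ᵥ y + α * D.logExpMoment (α⁻¹ • φ) (A y)
      + α * D.logExpMoment (-(α⁻¹ • φ)) (A x) + 2 * α * r := by
  simp [PhiFun, GoodPair.logExpMoment, div_eq_inv_mul]

theorem phiFun_eq_phiFun_zero_add (r : ℝ) (x y : Fin n → ℝ) (φ : Ω → ℝ) (α : ℝ) :
    PhiFun D A g r x y φ α = PhiFun D A g 0 x y φ α + 2 * α * r := by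
  simp [PhiFun]

theorem phiStarIS_eq_iInf_supPhiFun (X : Set (Fin n → ℝ)) (r : ℝ) :
    PhiStarIS D A g X r = (1 / 2) * ⨅ i : D.F × Ioi (0 : ℝ), supPhiFun D A g X i.1 i.2 r := by
  have hsup (φ : Ω → ℝ) (α : ℝ) : supPhiFun D A g X φ α r =
      sSup {w : ℝ | ∃ x ∈ X, ∃ y ∈ X, w = PhiFun D A g r x y φ α} := by
    rw [supPhiFun, iSup]
    congr 1
    ext w
    simp [eq_comm]
  rw [PhiStarIS, iInf]
  congr 2
  ext v
  simp [hsup, eq_comm]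

variable {φ : Ω → ℝ} {α r : ℝ} {X : Set (Fin n → ℝ)}

theorem phiFun_self_nonneg {x : Fin n → ℝ} (hx : A x ∈ D.M) (hφ : φ ∈ D.F) (hα : 0 ≤ α)
    (hr : 0 ≤ r) : 0 ≤ PhiFun D A g r x x φ α := by
  have hmoment := D.logExpMoment_add_logExpMoment_neg_nonneg (D.F.smul_mem α⁻¹ hφ) hx
  calc 0 ≤ α * (D.logExpMoment (α⁻¹ • φ) (A x) + D.logExpMoment (-(α⁻¹ • φ)) (A x))
        + 2 * α * r := by positivity
    _ = PhiFun D A g r x x φ α := by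
      rw [phiFun_eq_logExpMoment]
      ring

theorem continuousOn_phiFun (hφ : φ ∈ D.F) :
    ContinuousOn (fun z : (Fin n → ℝ) × (Fin n → ℝ) => PhiFun D A g r z.1 z.2 φ α)
      ((A ⁻¹' D.M) ×ˢ (A ⁻¹' D.M)) := by
  have hφα : α⁻¹ • φ ∈ D.F := D.F.smul_mem α⁻¹ hφ
  have hleft := (D.continuousOn_logExpMoment_comp A (D.F.neg_mem hφα)).comp continuousOn_fst
    (mapsTo_fst_prod (t := A ⁻¹' D.M))
  have hright := (D.continuousOn_logExpMoment_comp A hφα).comp continuousOn_snd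
    (mapsTo_snd_prod (s := A ⁻¹' D.M))
  have hlinear : Continuous fun z : (Fin n → ℝ) × (Fin n → ℝ) => g ⬝ᵥ z.1 - g ⬝ᵥ z.2 := by
    fun_prop
  simp only [phiFun_eq_logExpMoment]
  exact ((hlinear.continuousOn.add (hright.const_mul α)).add (hleft.const_mul α)).add
    continuousOn_const

theorem bddAbove_range_phiFun (hX : IsCompact X) (hA : ∀ x ∈ X, A x ∈ D.M) (hφ : φ ∈ D.F) :
    BddAbove (range fun z : X × X => PhiFun D A g r z.1 z.2 φ α) := by
  have : CompactSpace X := isCompact_iff_compactSpace.mp hX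
  have hcont : Continuous fun z : X × X => PhiFun D A g r z.1 z.2 φ α :=
    (continuousOn_phiFun D A g hφ).comp_continuous
      (f := fun z : X × X => ((z.1 : Fin n → ℝ), (z.2 : Fin n → ℝ))) (by fun_prop)
      fun z => ⟨hA _ z.1.2, hA _ z.2.2⟩
  exact (isCompact_range hcont).bddAbove

theorem supPhiFun_nonneg (hXne : X.Nonempty) (hX : IsCompact X) (hA : ∀ x ∈ X, A x ∈ D.M)
    (hφ : φ ∈ D.F) (hα : 0 ≤ α) (hr : 0 ≤ r) : 0 ≤ supPhiFun D A g X φ α r := by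
  obtain ⟨x, hx⟩ := hXne
  exact le_ciSup_of_le (bddAbove_range_phiFun D A g hX hA hφ) (⟨x, hx⟩, ⟨x, hx⟩)
    (phiFun_self_nonneg D A g (hA x hx) hφ hα hr)

theorem supPhiFun_eq_supPhiFun_zero_add (hXne : X.Nonempty) (hX : IsCompact X)
    (hA : ∀ x ∈ X, A x ∈ D.M) (hφ : φ ∈ D.F) (α r : ℝ) :
    supPhiFun D A g X φ α r = supPhiFun D A g X φ α 0 + 2 * α * r := by
  have : Nonempty X := hXne.to_subtype
  simp only [supPhiFun, phiFun_eq_phiFun_zero_add D A g r]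
  exact (ciSup_add (bddAbove_range_phiFun D A g hX hA hφ) _).symm

theorem concaveOn_supPhiFun (hXne : X.Nonempty) (hX : IsCompact X) (hA : ∀ x ∈ X, A x ∈ D.M)
    (hφ : φ ∈ D.F) (α : ℝ) {s : Set ℝ} (hs : Convex ℝ s) :
    ConcaveOn ℝ s (supPhiFun D A g X φ α) := by
  rw [funext (supPhiFun_eq_supPhiFun_zero_add D A g hXne hX hA hφ α)]
  exact (concaveOn_const _ hs).add ((LinearMap.mulLeft ℝ (2 * α)).concaveOn hs)

theorem phiStar_nonneg_concave_general (hXne : X.Nonempty) (hX : IsCompact X)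
    (hA : ∀ x ∈ X, A x ∈ D.M) :
    (∀ r : ℝ, 0 ≤ r → 0 ≤ PhiStarIS D A g X r) ∧
    ConcaveOn ℝ (Set.Ici (0 : ℝ)) (fun r => PhiStarIS D A g X r) := by
  have hnonneg (r : ℝ) (hr : 0 ≤ r) (i : D.F × Ioi (0 : ℝ)) :
      0 ≤ supPhiFun D A g X i.1 i.2 r :=
    supPhiFun_nonneg D A g hXne hX hA i.1.2 i.2.2.le hr
  have hconcave : ConcaveOn ℝ (Ici (0 : ℝ)) fun r =>
      ⨅ i : D.F × Ioi (0 : ℝ), supPhiFun D A g X i.1 i.2 r :=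
    concaveOn_ciInf
      (fun i => concaveOn_supPhiFun D A g hXne hX hA i.1.2 i.2 (convex_Ici 0))
      fun r hr => ⟨0, forall_mem_range.mpr (hnonneg r hr)⟩
  simp only [phiStarIS_eq_iInf_supPhiFun]
  exact ⟨fun r hr => mul_nonneg (by norm_num) (Real.iInf_nonneg (hnonneg r hr)),
    hconcave.smul (by norm_num)⟩

end Phi

/-- `Φ_*(r)`, defined by `2Φ_*(r) = inf_{φ∈F, α>0} sup_{x,y∈X} Φ_r(x,y;φ,α)`,
is nonnegative and concave as a function of `r` on `[0, ∞)`. -/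
theorem phiStar_nonneg_concave
    {Ω : Type*} [MeasurableSpace Ω] [TopologicalSpace Ω] [PolishSpace Ω] [BorelSpace Ω]
    {P : Measure Ω} [SigmaFinite P] {m n : ℕ}
    (D : GoodPair Ω P (Fin m → ℝ))
    (X : Set (Fin n → ℝ)) (hXne : X.Nonempty) (hXcp : IsCompact X) (hXcv : Convex ℝ X)
    (A : (Fin n → ℝ) →ᵃ[ℝ] (Fin m → ℝ)) (hA : ∀ x ∈ X, A x ∈ D.M)
    (g : Fin n → ℝ) :
    (∀ r : ℝ, 0 ≤ r → 0 ≤ PhiStarIS D A g X r) ∧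
    ConcaveOn ℝ (Set.Ici (0 : ℝ)) (fun r => PhiStarIS D A g X r) :=
  phiStar_nonneg_concave_general D A g hXne hXcp hA
end

section
/- (Lemma 3.1) Let (D, F) be a good pair, X ⊆ ℝⁿ convex compact, A affine with A(X) ⊆ M, g ∈ ℝⁿ, and define 2Φ_*(r) = inf_{φ∈F, α>0} sup_{x,y∈X} Φ_r(x, y; φ, α). Then for every ε ∈ (0, 1), the minimax optimal ε-risk of affine estimates satisfies RiskA(ε) ≤ Φ_*(ln(2/ε)). -/
open MeasureTheory Real Matrix Set
open scoped ENNReal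

variable {Ω : Type*} [MeasurableSpace Ω] {P : Measure Ω}
  {E : Type*} [NormedAddCommGroup E] [NormedSpace ℝ E] {n : ℕ}

/-!
At a fixed `α > 0`, Markov's inequality for `exp (Z / α)` bounds the `(1 - exp (-r))`-quantile of a
random variable `Z` by `α * (log E[exp (Z / α)] + r)`. Take `r = log (2 / ε)`, so that each of the
two tails of an estimation error gets probability `ε / 2`. Then `Φ_r (x, y; φ, α)` is the sum of
the quantile bound for the downward error of `φ` at `x` and that for its upward error at `y`; since
the variables separate, its supremum over `x, y ∈ X` is the sum of the two worst cases, which are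
finite because the log-moments are concave, hence continuous, in the signal. Adding a constant to
`φ` moves the two worst cases by opposite amounts, so some shift `φ + c ∈ F` makes them equal, and
both are then half of the supremum.
-/

section ChernoffQuantile

open ProbabilityTheory

/-- The Chernoff bound, at scale `α > 0`, for the `(1 - exp (-r))`-quantile of `Z` under `ν`.
Its infimum over `α` is the entropic value-at-risk. -/
noncomputable def chernoffQuantile (ν : Measure Ω) (α r : ℝ) (Z : Ω → ℝ) : ℝ :=
  α * (cgf Z ν α⁻¹ + r)

variable {ν : Measure Ω} {α : ℝ} {Z : Ω → ℝ}

lemma chernoffQuantile_add_const [IsProbabilityMeasure ν] (hα : α ≠ 0)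
    (hZ : Integrable (fun ω => exp (α⁻¹ * Z ω)) ν) (r c : ℝ) :
    chernoffQuantile ν α r (fun ω => Z ω + c) = chernoffQuantile ν α r Z + c := by
  rw [chernoffQuantile, chernoffQuantile, cgf, cgf, mgf_add_const,
    log_mul (mgf_pos hZ).ne' (exp_pos _).ne', log_exp]
  field_simp
  ring

lemma measureReal_lt_le_exp_chernoffQuantile [IsFiniteMeasure ν] (hα : 0 < α)
    (hZ : Integrable (fun ω => exp (α⁻¹ * Z ω)) ν) (r t : ℝ) :
    ν.real {ω | t < Z ω} ≤ exp ((chernoffQuantile ν α r Z - t) / α - r) :=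
  calc ν.real {ω | t < Z ω}
      ≤ ν.real {ω | t ≤ Z ω} := measureReal_mono (ofPred_subset_ofPred.2 fun _ => le_of_lt)
    _ ≤ exp (-α⁻¹ * t + cgf Z ν α⁻¹) := measure_ge_le_exp_cgf t (inv_nonneg.2 hα.le) hZ
    _ = exp ((chernoffQuantile ν α r Z - t) / α - r) := by
        rw [chernoffQuantile]
        congr 1
        field_simp
        ring

lemma measureReal_lt_abs_le_two_mul_exp [IsFiniteMeasure ν] (hα : 0 < α)
    (hZ : Integrable (fun ω => exp (α⁻¹ * Z ω)) ν)
    (hZ' : Integrable (fun ω => exp (α⁻¹ * (-Z) ω)) ν) {r ρ : ℝ}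
    (hup : chernoffQuantile ν α r Z ≤ ρ) (hlow : chernoffQuantile ν α r (-Z) ≤ ρ) (δ : ℝ) :
    ν.real {ω | δ < |Z ω|} ≤ 2 * exp ((ρ - δ) / α - r) := by
  have hsplit : {ω | δ < |Z ω|} = {ω | δ < Z ω} ∪ {ω | δ < (-Z) ω} :=
    Set.ext fun _ => by simp only [mem_ofPred_eq, mem_union, lt_abs, Pi.neg_apply]
  rw [hsplit, two_mul]
  refine (measureReal_union_le _ _).trans (add_le_add ?_ ?_)
  · exact (measureReal_lt_le_exp_chernoffQuantile hα hZ r δ).trans (by gcongr)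
  · exact (measureReal_lt_le_exp_chernoffQuantile hα hZ' r δ).trans (by gcongr)

end ChernoffQuantile

namespace GoodPair

variable (D : GoodPair Ω P E) {μ : E} {φ : Ω → ℝ}

lemma const_mul_mem (hφ : φ ∈ D.F) (c : ℝ) : (fun ω => c * φ ω) ∈ D.F :=
  D.F.smul_mem c hφ

lemma div_const_mem (hφ : φ ∈ D.F) (c : ℝ) : (fun ω => φ ω / c) ∈ D.F := by
  simpa only [div_eq_inv_mul] using D.const_mul_mem hφ c⁻¹

lemma add_const_mem (hφ : φ ∈ D.F) (c : ℝ) : (fun ω => φ ω + c) ∈ D.F :=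
  D.F.add_mem hφ (D.F_const c)

lemma isProbabilityMeasure_obsMeasure (hμ : μ ∈ D.M) : IsProbabilityMeasure (obsMeasure D μ) where
  measure_univ := by
    rw [obsMeasure, withDensity_apply _ MeasurableSet.univ, Measure.restrict_univ,
      ← ofReal_integral_eq_lintegral_ofReal (integrable_of_integral_eq_one (D.p_prob μ hμ))
        (.of_forall fun ω => (D.p_pos μ hμ ω).le), D.p_prob μ hμ, ENNReal.ofReal_one]

lemma integral_obsMeasure (hμ : μ ∈ D.M) (f : Ω → ℝ) :
    ∫ ω, f ω ∂obsMeasure D μ = ∫ ω, f ω * D.p μ ω ∂P := by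
  rw [obsMeasure, integral_withDensity_eq_integral_toReal_smul (D.p_meas μ hμ).ennreal_ofReal
    (.of_forall fun _ => ENNReal.ofReal_lt_top)]
  simp only [ENNReal.toReal_ofReal (D.p_pos μ hμ _).le, smul_eq_mul, mul_comm]

lemma integrable_exp_obsMeasure (hμ : μ ∈ D.M) (hφ : φ ∈ D.F) :
    Integrable (fun ω => exp (φ ω)) (obsMeasure D μ) := by
  rw [obsMeasure, integrable_withDensity_iff (D.p_meas μ hμ).ennreal_ofReal
    (.of_forall fun _ => ENNReal.ofReal_lt_top)]
  simpa only [ENNReal.toReal_ofReal (D.p_pos μ hμ _).le] using D.F_finite φ hφ μ hμ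

end GoodPair

section Risk

variable {D : GoodPair Ω P E} {A : (Fin n → ℝ) →ᵃ[ℝ] E} {g : Fin n → ℝ} {X : Set (Fin n → ℝ)}
  {ε : ℝ}

lemma nonneg_of_iSup_obsMeasure_lt (hX : X.Nonempty) (hA : ∀ x ∈ X, A x ∈ D.M) (hε : ε ≤ 1)
    {ghat : Ω → ℝ} {δ : ℝ}
    (hδ : ⨆ x ∈ X, obsMeasure D (A x) {ω | δ < |ghat ω - g ⬝ᵥ x|} < ENNReal.ofReal ε) : 0 ≤ δ := by
  by_contra! hneg
  obtain ⟨x, hx⟩ := hX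
  have := D.isProbabilityMeasure_obsMeasure (hA x hx)
  have huniv : {ω | δ < |ghat ω - g ⬝ᵥ x|} = univ :=
    eq_univ_of_forall fun _ => hneg.trans_le (abs_nonneg _)
  have hlt := ((le_iSup₂ x hx).trans_lt hδ).trans_le (ENNReal.ofReal_le_one.2 hε)
  rw [huniv, measure_univ] at hlt
  exact hlt.false

lemma risk_nonneg (hX : X.Nonempty) (hA : ∀ x ∈ X, A x ∈ D.M) (hε : ε ≤ 1) (ghat : Ω → ℝ) :
    0 ≤ Risk D A g X ghat ε :=
  Real.sInf_nonneg fun _ => nonneg_of_iSup_obsMeasure_lt hX hA hε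

lemma risk_le_of_iSup_lt (hX : X.Nonempty) (hA : ∀ x ∈ X, A x ∈ D.M) (hε : ε ≤ 1)
    {ghat : Ω → ℝ} {δ : ℝ}
    (hδ : ⨆ x ∈ X, obsMeasure D (A x) {ω | δ < |ghat ω - g ⬝ᵥ x|} < ENNReal.ofReal ε) :
    Risk D A g X ghat ε ≤ δ :=
  csInf_le ⟨0, fun _ => nonneg_of_iSup_obsMeasure_lt hX hA hε⟩ hδ

lemma riskAff_le_risk (hX : X.Nonempty) (hA : ∀ x ∈ X, A x ∈ D.M) (hε : ε ≤ 1)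
    {φ : Ω → ℝ} (hφ : φ ∈ D.F) : RiskAff D A g X ε ≤ Risk D A g X φ ε := by
  refine csInf_le ⟨0, ?_⟩ ⟨φ, hφ, rfl⟩
  rintro _ ⟨ψ, -, rfl⟩
  exact risk_nonneg hX hA hε ψ

end Risk

section ErrorQuantile

/-- The Chernoff quantile of the estimation error `φ - gᵀx` when the signal is `x`.
The downward error `gᵀx - φ` is covered by negating both `g` and `φ`. -/
noncomputable def errorQuantile (D : GoodPair Ω P E) (A : (Fin n → ℝ) →ᵃ[ℝ] E) (g : Fin n → ℝ)
    (α r : ℝ) (φ : Ω → ℝ) (x : Fin n → ℝ) : ℝ :=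
  chernoffQuantile (obsMeasure D (A x)) α r fun ω => φ ω - g ⬝ᵥ x

variable {D : GoodPair Ω P E} {A : (Fin n → ℝ) →ᵃ[ℝ] E} {g : Fin n → ℝ} {X : Set (Fin n → ℝ)}
  {φ : Ω → ℝ} {α : ℝ} {x : Fin n → ℝ}

lemma errorQuantile_add_const (hx : A x ∈ D.M) (hφ : φ ∈ D.F) (hα : α ≠ 0) (r c : ℝ) :
    errorQuantile D A g α r (fun ω => φ ω + c) x = errorQuantile D A g α r φ x + c := by
  have := D.isProbabilityMeasure_obsMeasure hx
  have hint := D.integrable_exp_obsMeasure hx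
    (D.const_mul_mem (D.add_const_mem hφ (-(g ⬝ᵥ x))) α⁻¹)
  simp only [errorQuantile, sub_eq_add_neg, add_right_comm _ c]
  exact chernoffQuantile_add_const hα hint r c

lemma errorQuantile_eq (hx : A x ∈ D.M) (hφ : φ ∈ D.F) (hα : α ≠ 0) (r : ℝ) :
    errorQuantile D A g α r φ x =
      α * log (∫ ω, exp (φ ω / α) * D.p (A x) ω ∂P) - g ⬝ᵥ x + α * r := by
  have := D.isProbabilityMeasure_obsMeasure hx
  have hint := D.integrable_exp_obsMeasure hx (D.const_mul_mem hφ α⁻¹)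
  simp only [errorQuantile, sub_eq_add_neg, chernoffQuantile_add_const hα hint r]
  simp only [chernoffQuantile, ProbabilityTheory.cgf, ProbabilityTheory.mgf,
    D.integral_obsMeasure hx, ← div_eq_inv_mul]
  ring

lemma phiFun_eq_errorQuantile_add {y : Fin n → ℝ} (hx : A x ∈ D.M) (hy : A y ∈ D.M)
    (hφ : φ ∈ D.F) (hα : α ≠ 0) (r : ℝ) :
    PhiFun D A g r x y φ α =
      errorQuantile D A (-g) α r (-φ) x + errorQuantile D A g α r φ y := by
  rw [errorQuantile_eq hx (D.F.neg_mem hφ) hα, errorQuantile_eq hy hφ hα, PhiFun]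
  simp only [Pi.neg_apply, neg_dotProduct]
  ring

lemma continuousOn_errorQuantile (hφ : φ ∈ D.F) (hα : α ≠ 0) (r : ℝ) :
    ContinuousOn (errorQuantile D A g α r φ) (A ⁻¹' D.M) := by
  have hopen : IsOpen (A ⁻¹' D.M) := D.M_open.preimage A.continuous_of_finiteDimensional
  have hlog : ContinuousOn (fun x => log (∫ ω, exp (φ ω / α) * D.p (A x) ω ∂P)) (A ⁻¹' D.M) :=
    ((D.F_concave _ (D.div_const_mem hφ α)).comp_affineMap A).continuousOn hopen
  have hlin : Continuous fun x : Fin n → ℝ => g ⬝ᵥ x := continuous_const.dotProduct continuous_id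
  exact (((hlog.const_mul α).sub hlin.continuousOn).add continuousOn_const).congr
    fun x hx => errorQuantile_eq hx hφ hα r

lemma bddAbove_image_errorQuantile (hX : IsCompact X) (hA : ∀ x ∈ X, A x ∈ D.M) (hφ : φ ∈ D.F)
    (hα : α ≠ 0) (r : ℝ) : BddAbove (errorQuantile D A g α r φ '' X) :=
  hX.bddAbove_image ((continuousOn_errorQuantile hφ hα r).mono hA)

lemma sSup_phiFun_eq (hXne : X.Nonempty) (hX : IsCompact X) (hA : ∀ x ∈ X, A x ∈ D.M)
    (hφ : φ ∈ D.F) (hα : α ≠ 0) (r : ℝ) :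
    sSup {w : ℝ | ∃ x ∈ X, ∃ y ∈ X, w = PhiFun D A g r x y φ α} =
      sSup (errorQuantile D A (-g) α r (-φ) '' X) + sSup (errorQuantile D A g α r φ '' X) := by
  rw [← csSup_add (hXne.image _) (bddAbove_image_errorQuantile hX hA (D.F.neg_mem hφ) hα r)
    (hXne.image _) (bddAbove_image_errorQuantile hX hA hφ hα r)]
  congr 1
  ext w
  simp only [mem_ofPred_eq, Set.mem_add, exists_mem_image]
  refine exists_congr fun x => and_congr_right fun hx =>
    exists_congr fun y => and_congr_right fun hy => ?_
  rw [phiFun_eq_errorQuantile_add (hA x hx) (hA y hy) hφ hα, eq_comm]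

lemma obsMeasure_lt_abs_le_of_errorQuantile_le {ε ρ : ℝ} (hx : A x ∈ D.M) (hφ : φ ∈ D.F)
    (hα : 0 < α) (hε : 0 < ε) (hup : errorQuantile D A g α (log (2 / ε)) φ x ≤ ρ)
    (hlow : errorQuantile D A (-g) α (log (2 / ε)) (-φ) x ≤ ρ) (δ : ℝ) :
    obsMeasure D (A x) {ω | δ < |φ ω - g ⬝ᵥ x|} ≤ ENNReal.ofReal (ε * exp ((ρ - δ) / α)) := by
  have := D.isProbabilityMeasure_obsMeasure hx
  have herr : (fun ω => φ ω - g ⬝ᵥ x) ∈ D.F := D.F.sub_mem hφ (D.F_const _)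
  have herr_neg : (fun ω => (-φ) ω - (-g) ⬝ᵥ x) = -fun ω => φ ω - g ⬝ᵥ x := by
    ext ω
    simp only [Pi.neg_apply, neg_dotProduct]
    ring
  rw [errorQuantile, herr_neg] at hlow
  have htail := measureReal_lt_abs_le_two_mul_exp hα
    (D.integrable_exp_obsMeasure hx (D.const_mul_mem herr α⁻¹))
    (D.integrable_exp_obsMeasure hx (D.const_mul_mem (D.F.neg_mem herr) α⁻¹)) hup hlow δ
  rw [exp_sub, exp_log (by positivity)] at htail
  rw [← ofReal_measureReal]
  refine ENNReal.ofReal_le_ofReal (htail.trans_eq ?_)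
  field_simp

lemma risk_le_of_errorQuantile_le {ε ρ : ℝ} (hXne : X.Nonempty) (hA : ∀ x ∈ X, A x ∈ D.M)
    (hφ : φ ∈ D.F) (hα : 0 < α) (hε₀ : 0 < ε) (hε₁ : ε ≤ 1)
    (hup : ∀ x ∈ X, errorQuantile D A g α (log (2 / ε)) φ x ≤ ρ)
    (hlow : ∀ x ∈ X, errorQuantile D A (-g) α (log (2 / ε)) (-φ) x ≤ ρ) :
    Risk D A g X φ ε ≤ ρ := by
  refine le_of_forall_gt_imp_ge_of_dense fun δ hδ => risk_le_of_iSup_lt hXne hA hε₁ ?_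
  have hfactor : exp ((ρ - δ) / α) < 1 :=
    exp_lt_one_iff.2 (div_neg_of_neg_of_pos (sub_neg.2 hδ) hα)
  calc ⨆ x ∈ X, obsMeasure D (A x) {ω | δ < |φ ω - g ⬝ᵥ x|}
      ≤ ENNReal.ofReal (ε * exp ((ρ - δ) / α)) := iSup₂_le fun x hx =>
        obsMeasure_lt_abs_le_of_errorQuantile_le (hA x hx) hφ hα hε₀ (hup x hx) (hlow x hx) δ
    _ < ENNReal.ofReal ε :=
        (ENNReal.ofReal_lt_ofReal_iff hε₀).2 (mul_lt_of_lt_one_right hε₀ hfactor)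

lemma two_mul_riskAff_le_sSup_phiFun {ε : ℝ} (hXne : X.Nonempty) (hX : IsCompact X)
    (hA : ∀ x ∈ X, A x ∈ D.M) (hφ : φ ∈ D.F) (hα : 0 < α) (hε₀ : 0 < ε) (hε₁ : ε ≤ 1) :
    2 * RiskAff D A g X ε ≤
      sSup {w : ℝ | ∃ x ∈ X, ∃ y ∈ X, w = PhiFun D A g (log (2 / ε)) x y φ α} := by
  rw [sSup_phiFun_eq hXne hX hA hφ hα.ne']
  set down := errorQuantile D A (-g) α (log (2 / ε)) (-φ)
  set up := errorQuantile D A g α (log (2 / ε)) φ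
  have hdown : ∀ x ∈ X, down x ≤ sSup (down '' X) := fun x hx => le_csSup
    (bddAbove_image_errorQuantile hX hA (D.F.neg_mem hφ) hα.ne' _) (mem_image_of_mem _ hx)
  have hup : ∀ x ∈ X, up x ≤ sSup (up '' X) := fun x hx => le_csSup
    (bddAbove_image_errorQuantile hX hA hφ hα.ne' _) (mem_image_of_mem _ hx)
  set c := (sSup (down '' X) - sSup (up '' X)) / 2 with hc
  have hneg : (-fun ω => φ ω + c) = fun ω => (-φ) ω + -c := funext fun ω => neg_add (φ ω) c
  have hrisk : Risk D A g X (fun ω => φ ω + c) ε ≤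
      (sSup (down '' X) + sSup (up '' X)) / 2 := by
    refine risk_le_of_errorQuantile_le hXne hA (D.add_const_mem hφ c) hα hε₀ hε₁
      (fun x hx => ?_) fun x hx => ?_
    · rw [errorQuantile_add_const (hA x hx) hφ hα.ne']
      linarith [hup x hx]
    · rw [hneg, errorQuantile_add_const (hA x hx) (D.F.neg_mem hφ) hα.ne']
      linarith [hdown x hx]
  linarith [riskAff_le_risk (g := g) hXne hA hε₁ (D.add_const_mem hφ c)]

end ErrorQuantile

theorem riskAff_le_phiStar_general (D : GoodPair Ω P E) {X : Set (Fin n → ℝ)}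
    (hXne : X.Nonempty) (hX : IsCompact X) (A : (Fin n → ℝ) →ᵃ[ℝ] E) (hA : ∀ x ∈ X, A x ∈ D.M)
    (g : Fin n → ℝ) {ε : ℝ} (hε₀ : 0 < ε) (hε₁ : ε ≤ 1) :
    RiskAff D A g X ε ≤ PhiStarIS D A g X (log (2 / ε)) := by
  rw [PhiStarIS, one_div, ← div_eq_inv_mul, le_div_iff₀' two_pos]
  refine le_csInf ⟨_, 0, D.F.zero_mem, 1, one_pos, rfl⟩ ?_
  rintro _ ⟨φ, hφ, α, hα, rfl⟩
  exact two_mul_riskAff_le_sSup_phiFun hXne hX hA hφ hα hε₀ hε₁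

/-- **Lemma 3.1.** For every `ε ∈ (0,1)`, the minimax optimal `ε`-risk of affine
estimates satisfies `RiskA(ε) ≤ Φ_*(ln(2/ε))`, where
`2Φ_*(r) = inf_{φ∈F, α>0} sup_{x,y∈X} Φ_r(x,y;φ,α)`. -/
theorem riskAff_le_phiStar
    {Ω : Type*} [MeasurableSpace Ω] [TopologicalSpace Ω] [PolishSpace Ω] [BorelSpace Ω]
    {P : Measure Ω} [SigmaFinite P] {m n : ℕ}
    (D : GoodPair Ω P (Fin m → ℝ))
    (X : Set (Fin n → ℝ)) (hXne : X.Nonempty) (hXcp : IsCompact X) (hXcv : Convex ℝ X)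
    (A : (Fin n → ℝ) →ᵃ[ℝ] (Fin m → ℝ)) (hA : ∀ x ∈ X, A x ∈ D.M)
    (g : Fin n → ℝ) (ε : ℝ) (hε : ε ∈ Set.Ioo (0 : ℝ) 1) :
    RiskAff D A g X ε ≤ PhiStarIS D A g X (Real.log (2 / ε)) :=
  riskAff_le_phiStar_general D hXne hXcp A hA g hε.1 hε.2.le
end

section
/- Let (Ω, P) be a measurable space with σ-finite measure P, and let p, q : Ω → ℝ be Borel probability densities with respect to P which are strictly positive everywhere. Then for every Borel function φ : Ω → ℝ such that the integrals ∫_Ω e^{−φ} p dP and ∫_Ω e^{φ} q dP are finite, one has ln(∫_Ω e^{−φ(ω)} p(ω) P(dω)) + ln(∫_Ω e^{φ(ω)} q(ω) P(dω)) ≥ 2·ln(∫_Ω √(p(ω)q(ω)) P(dω)), with equality when φ = (1/2)·ln(p/q). -/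
/-!
The Hellinger affinity `∫ √(fg)` does not change when `(f, g)` is replaced by
`(e^{-φ} f, e^{φ} g)`, so Cauchy–Schwarz for the tilted pair bounds it by
`√(∫ e^{-φ} f * ∫ e^{φ} g)` for every `φ`. Equality in Cauchy–Schwarz asks for the tilted functions
to be proportional, and `φ = (1/2) log (f/g)` makes both of them equal to `√(fg)`.
-/

open MeasureTheory Real

section HellingerAffinity

variable {Ω : Type*} [MeasurableSpace Ω] {μ : Measure Ω} {f g : Ω → ℝ}

/-- The Hellinger affinity (Bhattacharyya coefficient) of `f` and `g` with respect to `μ`, the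
quantity that oppositely tilted integrals are compared with. Neither function is required to have
integral one; as a Bochner integral, the affinity is `0` when `√(fg)` is not integrable. -/
noncomputable def hellingerAffinity (μ : Measure Ω) (f g : Ω → ℝ) : ℝ :=
  ∫ ω, √(f ω * g ω) ∂μ

lemma memLp_two_sqrt (hf : Integrable f μ) : MemLp (fun ω => √(f ω)) 2 μ := by
  rw [memLp_two_iff_integrable_sq (continuous_sqrt.comp_aestronglyMeasurable hf.1)]
  simpa only [sq_sqrt'] using hf.pos_part

lemma sqrt_mul_ae_eq (hf₀ : 0 ≤ᵐ[μ] f) :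
    (fun ω => √(f ω * g ω)) =ᵐ[μ] fun ω => √(f ω) * √(g ω) :=
  hf₀.mono fun ω hω => sqrt_mul hω (g ω)

lemma integrable_sqrt_mul (hf₀ : 0 ≤ᵐ[μ] f) (hf : Integrable f μ) (hg : Integrable g μ) :
    Integrable (fun ω => √(f ω * g ω)) μ :=
  ((memLp_two_sqrt hf).integrable_mul (memLp_two_sqrt hg)).congr (sqrt_mul_ae_eq hf₀).symm

lemma integral_sq_sqrt (hf₀ : 0 ≤ᵐ[μ] f) : ∫ ω, √(f ω) ^ 2 ∂μ = ∫ ω, f ω ∂μ :=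
  integral_congr_ae (hf₀.mono fun _ hω => sq_sqrt hω)

lemma hellingerAffinity_le_sqrt_integral_mul_integral (hf₀ : 0 ≤ᵐ[μ] f) (hg₀ : 0 ≤ᵐ[μ] g)
    (hf : Integrable f μ) (hg : Integrable g μ) :
    hellingerAffinity μ f g ≤ √((∫ ω, f ω ∂μ) * ∫ ω, g ω ∂μ) := by
  have cauchy_schwarz := integral_mul_le_Lp_mul_Lq_of_nonneg (μ := μ) HolderConjugate.two_two
    (.of_forall fun ω => sqrt_nonneg (f ω)) (.of_forall fun ω => sqrt_nonneg (g ω))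
    (by simpa only [ENNReal.ofReal_ofNat] using memLp_two_sqrt hf)
    (by simpa only [ENNReal.ofReal_ofNat] using memLp_two_sqrt hg)
  simp only [rpow_two, ← sqrt_eq_rpow, integral_sq_sqrt hf₀, integral_sq_sqrt hg₀]
    at cauchy_schwarz
  rwa [hellingerAffinity, integral_congr_ae (sqrt_mul_ae_eq hf₀),
    sqrt_mul (integral_nonneg_of_ae hf₀)]

lemma two_mul_log_hellingerAffinity_le (hf₀ : 0 ≤ᵐ[μ] f) (hg₀ : 0 ≤ᵐ[μ] g)
    (hf : Integrable f μ) (hg : Integrable g μ) (hfg : 0 < hellingerAffinity μ f g) :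
    2 * log (hellingerAffinity μ f g) ≤ log (∫ ω, f ω ∂μ) + log (∫ ω, g ω ∂μ) := by
  have hle := hellingerAffinity_le_sqrt_integral_mul_integral hf₀ hg₀ hf hg
  have hpos : 0 < (∫ ω, f ω ∂μ) * ∫ ω, g ω ∂μ := sqrt_pos.1 (hfg.trans_le hle)
  calc 2 * log (hellingerAffinity μ f g)
      ≤ 2 * log √((∫ ω, f ω ∂μ) * ∫ ω, g ω ∂μ) := by gcongr
    _ = log ((∫ ω, f ω ∂μ) * ∫ ω, g ω ∂μ) := by rw [log_sqrt hpos.le]; ring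
    _ = log (∫ ω, f ω ∂μ) + log (∫ ω, g ω ∂μ) :=
        log_mul (left_ne_zero_of_mul hpos.ne') (right_ne_zero_of_mul hpos.ne')

lemma hellingerAffinity_exp_neg_mul_exp_mul (μ : Measure Ω) (f g φ : Ω → ℝ) :
    hellingerAffinity μ (fun ω => exp (-φ ω) * f ω) (fun ω => exp (φ ω) * g ω) =
      hellingerAffinity μ f g := by
  have tilts_cancel (ω : Ω) : exp (-φ ω) * f ω * (exp (φ ω) * g ω) = f ω * g ω := by
    rw [mul_mul_mul_comm, ← exp_add, neg_add_cancel, exp_zero, one_mul]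
  simp only [hellingerAffinity, tilts_cancel]

lemma integral_pos_of_ae_pos [NeZero μ] (hf₀ : ∀ᵐ ω ∂μ, 0 < f ω) (hf : Integrable f μ) :
    0 < ∫ ω, f ω ∂μ := by
  have hnonneg : 0 ≤ᵐ[μ] f := hf₀.mono fun _ => le_of_lt
  refine (integral_nonneg_of_ae hnonneg).lt_of_ne' fun hzero => ?_
  obtain ⟨ω, hpos, heq⟩ :=
    (hf₀.and ((integral_eq_zero_iff_of_nonneg_ae hnonneg hf).1 hzero)).exists
  exact hpos.ne' heq

lemma hellingerAffinity_pos [NeZero μ] (hf₀ : ∀ᵐ ω ∂μ, 0 < f ω) (hg₀ : ∀ᵐ ω ∂μ, 0 < g ω)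
    (hfg : Integrable (fun ω => √(f ω * g ω)) μ) : 0 < hellingerAffinity μ f g := by
  refine integral_pos_of_ae_pos ?_ hfg
  filter_upwards [hf₀, hg₀] with ω hfω hgω using sqrt_pos.2 (mul_pos hfω hgω)

end HellingerAffinity

lemma exp_half_log_div_mul {a b : ℝ} (ha : 0 < a) (hb : 0 < b) :
    exp (1 / 2 * log (a / b)) * b = √(a * b) := by
  calc exp (1 / 2 * log (a / b)) * b
      = √(a / b) * √(b ^ 2) := by
        rw [one_div_mul_eq_div, exp_half, exp_log (div_pos ha hb), sqrt_sq hb.le]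
    _ = √(a * b) := by rw [← sqrt_mul (div_pos ha hb).le]; congr 1; field_simp

lemma exp_neg_half_log_div_mul {a b : ℝ} (ha : 0 < a) (hb : 0 < b) :
    exp (-(1 / 2 * log (a / b))) * a = √(a * b) := by
  rw [← mul_neg, ← log_inv, inv_div, exp_half_log_div_mul hb ha, mul_comm]

theorem log_mgf_sum_ge_twice_log_hellinger_general
    {Ω : Type*} [MeasurableSpace Ω] (μ : Measure Ω) [NeZero μ] (p q : Ω → ℝ)
    (hp : ∀ᵐ ω ∂μ, 0 < p ω) (hq : ∀ᵐ ω ∂μ, 0 < q ω)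
    (hpq : Integrable (fun ω => √(p ω * q ω)) μ) :
    (∀ φ : Ω → ℝ,
      Integrable (fun ω => exp (-φ ω) * p ω) μ →
      Integrable (fun ω => exp (φ ω) * q ω) μ →
      2 * log (hellingerAffinity μ p q) ≤
        log (∫ ω, exp (-φ ω) * p ω ∂μ) + log (∫ ω, exp (φ ω) * q ω ∂μ))
    ∧ Integrable (fun ω => exp (-(1 / 2 * log (p ω / q ω))) * p ω) μ
    ∧ Integrable (fun ω => exp (1 / 2 * log (p ω / q ω)) * q ω) μ
    ∧ log (∫ ω, exp (-(1 / 2 * log (p ω / q ω))) * p ω ∂μ)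
        + log (∫ ω, exp (1 / 2 * log (p ω / q ω)) * q ω ∂μ)
      = 2 * log (hellingerAffinity μ p q) := by
  have tilt_p : (fun ω => √(p ω * q ω)) =ᵐ[μ]
      fun ω => exp (-(1 / 2 * log (p ω / q ω))) * p ω := by
    filter_upwards [hp, hq] with ω hpω hqω using (exp_neg_half_log_div_mul hpω hqω).symm
  have tilt_q : (fun ω => √(p ω * q ω)) =ᵐ[μ]
      fun ω => exp (1 / 2 * log (p ω / q ω)) * q ω := by
    filter_upwards [hp, hq] with ω hpω hqω using (exp_half_log_div_mul hpω hqω).symm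
  refine ⟨fun φ hφp hφq => ?_, hpq.congr tilt_p, hpq.congr tilt_q, ?_⟩
  · rw [← hellingerAffinity_exp_neg_mul_exp_mul μ p q φ]
    refine two_mul_log_hellingerAffinity_le ?_ ?_ hφp hφq ?_
    · exact hp.mono fun _ hpω => (mul_pos (exp_pos _) hpω).le
    · exact hq.mono fun _ hqω => (mul_pos (exp_pos _) hqω).le
    · rw [hellingerAffinity_exp_neg_mul_exp_mul]
      exact hellingerAffinity_pos hp hq hpq
  · rw [← integral_congr_ae tilt_p, ← integral_congr_ae tilt_q, ← two_mul, hellingerAffinity]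

/-- For strictly positive probability densities `p, q` w.r.t. a σ-finite measure `P`,
and any Borel `φ` with `∫ e^{−φ} p dP` and `∫ e^{φ} q dP` finite, one has
`ln ∫ e^{−φ} p dP + ln ∫ e^{φ} q dP ≥ 2 ln ∫ √(pq) dP`, with equality for
`φ = (1/2) ln(p/q)`. -/
theorem log_mgf_sum_ge_twice_log_hellinger
    {Ω : Type*} [MeasurableSpace Ω] (P : Measure Ω) [SigmaFinite P]
    (p q : Ω → ℝ) (hpm : Measurable p) (hqm : Measurable q)
    (hp : ∀ ω, 0 < p ω) (hq : ∀ ω, 0 < q ω)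
    (hp1 : ∫ ω, p ω ∂P = 1) (hq1 : ∫ ω, q ω ∂P = 1) :
    (∀ φ : Ω → ℝ, Measurable φ →
      Integrable (fun ω => Real.exp (-φ ω) * p ω) P →
      Integrable (fun ω => Real.exp (φ ω) * q ω) P →
      2 * Real.log (∫ ω, Real.sqrt (p ω * q ω) ∂P) ≤
        Real.log (∫ ω, Real.exp (-φ ω) * p ω ∂P)
          + Real.log (∫ ω, Real.exp (φ ω) * q ω ∂P))
    ∧ Real.log (∫ ω, Real.exp (-((1/2) * Real.log (p ω / q ω))) * p ω ∂P)
        + Real.log (∫ ω, Real.exp ((1/2) * Real.log (p ω / q ω)) * q ω ∂P)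
      = 2 * Real.log (∫ ω, Real.sqrt (p ω * q ω) ∂P) := by
  have : NeZero P := ⟨by rintro rfl; simp at hp1⟩
  have hpq := integrable_sqrt_mul (.of_forall fun ω => (hp ω).le)
    (integrable_of_integral_eq_one hp1) (integrable_of_integral_eq_one hq1)
  obtain ⟨hle, -, -, heq⟩ :=
    log_mgf_sum_ge_twice_log_hellinger_general P p q (.of_forall hp) (.of_forall hq) hpq
  exact ⟨fun φ _ => hle φ, heq⟩
end

section
/- In the Gaussian observation model ω = Ax + ξ with ξ ∼ N(0, I_L), where X ⊆ ℝⁿ is convex compact, A is an L×n matrix, and g ∈ ℝⁿ, the saddle-point value Φ_* admits the explicit form: for every r > 0, 2Φ_*(r) = max{ gᵀx − gᵀy : x, y ∈ X, ‖A(x − y)‖₂ ≤ 2√(2r) }. Equivalently, for fixed x, y ∈ X, inf_{φ∈ℝ^L, α>0} [gᵀx − gᵀy + φᵀA(y − x) + φᵀφ/α + 2αr] equals gᵀx − gᵀy if ‖A(x − y)‖₂ ≤ 2√(2r) and equals −∞ otherwise. -/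
/-!
By the Gaussian moment identity both logarithms in `Φ_r` are explicit, and `Φ_r(x, y; φ, α)`
becomes `c + φᵀd + φᵀφ/α + 2αr` with `c = gᵀx − gᵀy` and `d = A(y − x)`. Completing the square in
`φ` turns this into `c + ‖φ + (α/2)d‖²/α + (α/4)(8r − ‖d‖²)`. If `‖d‖² ≤ 8r`, every term after `c`
is nonnegative and `φ = 0`, `α → 0` brings the value down to `c`; if `‖d‖² > 8r`, then
`φ = −(α/2)d`, `α → ∞` drives it to `−∞`. Hence only the pairs with `‖A(x − y)‖ ≤ 2√(2r)` enter the
outer supremum, and it is attained by compactness.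
-/

open MeasureTheory Real Matrix Set Filter
open scoped ENNReal Topology

/-- The standard Gaussian `N(0, I_L)` density on `ℝ^L`. -/
noncomputable def stdGaussDensity {L : ℕ} (ω : Fin L → ℝ) : ℝ :=
  (2 * Real.pi) ^ (-(L : ℝ) / 2) * Real.exp (-(∑ i, ω i ^ 2) / 2)

/-- The distribution `N(Ax, I_L)` of the observation `ω = Ax + ξ`, `ξ ∼ N(0, I_L)`. -/
noncomputable def gaussObs {L n : ℕ} (A : Matrix (Fin L) (Fin n) ℝ) (x : Fin n → ℝ) :
    Measure (Fin L → ℝ) :=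
  volume.withDensity fun ω => ENNReal.ofReal (stdGaussDensity (ω - A.mulVec x))

/-- The Euclidean norm `‖v‖₂` on `ℝ^L`. -/
noncomputable def euclNorm {L : ℕ} (v : Fin L → ℝ) : ℝ :=
  Real.sqrt (∑ i, v i ^ 2)

/-- The `ε`-risk of an estimate `ghat` in the Gaussian observation model. -/
noncomputable def gaussRisk {L n : ℕ} (A : Matrix (Fin L) (Fin n) ℝ)
    (g : Fin n → ℝ) (X : Set (Fin n → ℝ)) (ghat : (Fin L → ℝ) → ℝ) (ε : ℝ) : ℝ :=
  sInf {δ : ℝ |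
    (⨆ x ∈ X, gaussObs A x {ω | δ < |ghat ω - g ⬝ᵥ x|}) < ENNReal.ofReal ε}

/-- The minimax optimal `ε`-risk over all Borel estimates in the Gaussian model. -/
noncomputable def gaussRiskStar {L n : ℕ} (A : Matrix (Fin L) (Fin n) ℝ)
    (g : Fin n → ℝ) (X : Set (Fin n → ℝ)) (ε : ℝ) : ℝ :=
  sInf {ρ : ℝ | ∃ ghat : (Fin L → ℝ) → ℝ, Measurable ghat ∧
    ρ = gaussRisk A g X ghat ε}

/-- The function `Φ_r(x, y; φ, α)` of the Gaussian model (with linear `φ`). -/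
noncomputable def gaussPhi {L n : ℕ} (A : Matrix (Fin L) (Fin n) ℝ) (g : Fin n → ℝ)
    (r : ℝ) (x y : Fin n → ℝ) (φ : Fin L → ℝ) (α : ℝ) : ℝ :=
  g ⬝ᵥ x - g ⬝ᵥ y
    + α * Real.log (∫ ω : Fin L → ℝ,
        Real.exp (-(φ ⬝ᵥ ω) / α) * stdGaussDensity (ω - A.mulVec x))
    + α * Real.log (∫ ω : Fin L → ℝ,
        Real.exp ((φ ⬝ᵥ ω) / α) * stdGaussDensity (ω - A.mulVec y))
    + 2 * α * r

/-- `Φ_*(r)`: `2Φ_*(r) = sup_{x,y∈X} inf_{φ∈ℝ^L, α>0} Φ_r(x,y;φ,α)`. -/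
noncomputable def gaussPhiStar {L n : ℕ} (A : Matrix (Fin L) (Fin n) ℝ)
    (g : Fin n → ℝ) (X : Set (Fin n → ℝ)) (r : ℝ) : ℝ :=
  (1/2) * sSup {v : ℝ | ∃ x ∈ X, ∃ y ∈ X,
    v = sInf {w : ℝ | ∃ φ : Fin L → ℝ, ∃ α : ℝ, 0 < α ∧
      w = gaussPhi A g r x y φ α}}

/-- The standard Gaussian upper tail probability `y = (1/√(2π)) ∫_x^∞ e^{−t²/2} dt`. -/
noncomputable def gaussTail (x : ℝ) : ℝ :=
  (Real.sqrt (2 * Real.pi))⁻¹ * ∫ t in Set.Ioi x, Real.exp (-t ^ 2 / 2)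

/-- The inverse error function `ErfInv`: for `y ∈ (0, 1/2)`, `ErfInv y` is the
unique `x` with `gaussTail x = y` (realized here as an infimum). -/
noncomputable def erfInv (y : ℝ) : ℝ :=
  sInf {x : ℝ | gaussTail x ≤ y}

section MomentGeneratingFunction

theorem integral_gaussianPDFReal_mul_exp (μ : ℝ) {v : NNReal} (hv : v ≠ 0) (t : ℝ) :
    ∫ s : ℝ, ProbabilityTheory.gaussianPDFReal μ v s * Real.exp (t * s)
      = Real.exp (μ * t + v * t ^ 2 / 2) := by
  have h_mgf := congrFun (ProbabilityTheory.mgf_id_gaussianReal (μ := μ) (v := v)) t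
  simpa only [ProbabilityTheory.mgf, id,
    ProbabilityTheory.integral_gaussianReal_eq_integral_smul hv, smul_eq_mul] using h_mgf

variable {L : ℕ}

theorem stdGaussDensity_sub_eq_prod (ω a : Fin L → ℝ) :
    stdGaussDensity (ω - a) = ∏ i, ProbabilityTheory.gaussianPDFReal (a i) 1 (ω i) := by
  have h_const : (2 * Real.pi) ^ (-(L : ℝ) / 2) = (√(2 * Real.pi))⁻¹ ^ L := by
    have hπ : (0 : ℝ) ≤ 2 * Real.pi := by positivity
    rw [Real.sqrt_eq_rpow, ← Real.rpow_neg hπ, ← Real.rpow_natCast, ← Real.rpow_mul hπ]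
    congr 1
    ring
  simp only [stdGaussDensity, ProbabilityTheory.gaussianPDFReal, Finset.prod_mul_distrib,
    ← Real.exp_sum, h_const, NNReal.coe_one, mul_one, Finset.prod_const, Finset.card_univ,
    Fintype.card_fin, Pi.sub_apply, ← Finset.sum_div, Finset.sum_neg_distrib]

theorem integral_exp_dotProduct_mul_stdGaussDensity (ψ a : Fin L → ℝ) :
    ∫ ω : Fin L → ℝ, Real.exp (ψ ⬝ᵥ ω) * stdGaussDensity (ω - a)
      = Real.exp (ψ ⬝ᵥ a + ψ ⬝ᵥ ψ / 2) := by
  calc ∫ ω : Fin L → ℝ, Real.exp (ψ ⬝ᵥ ω) * stdGaussDensity (ω - a)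
      = ∫ ω : Fin L → ℝ,
          ∏ i, ProbabilityTheory.gaussianPDFReal (a i) 1 (ω i) * Real.exp (ψ i * ω i) := by
        simp only [stdGaussDensity_sub_eq_prod, dotProduct, Real.exp_sum, Finset.prod_mul_distrib,
          mul_comm]
    _ = ∏ i, ∫ s : ℝ, ProbabilityTheory.gaussianPDFReal (a i) 1 s * Real.exp (ψ i * s) :=
        integral_fintype_prod_volume_eq_prod fun i s =>
          ProbabilityTheory.gaussianPDFReal (a i) 1 s * Real.exp (ψ i * s)
    _ = ∏ i, Real.exp (ψ i * a i + ψ i * ψ i / 2) := by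
        simp only [integral_gaussianPDFReal_mul_exp _ one_ne_zero, NNReal.coe_one, one_mul, sq,
          mul_comm (a _)]
    _ = Real.exp (ψ ⬝ᵥ a + ψ ⬝ᵥ ψ / 2) := by
        simp only [← Real.exp_sum, dotProduct, Finset.sum_add_distrib, Finset.sum_div]

theorem mul_log_integral_exp_dotProduct_div (φ a : Fin L → ℝ) {α : ℝ} (hα : α ≠ 0) :
    α * Real.log (∫ ω : Fin L → ℝ, Real.exp ((φ ⬝ᵥ ω) / α) * stdGaussDensity (ω - a))
      = φ ⬝ᵥ a + φ ⬝ᵥ φ / α / 2 := by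
  have h_scale (ω : Fin L → ℝ) : (φ ⬝ᵥ ω) / α = (α⁻¹ • φ) ⬝ᵥ ω := by
    rw [smul_dotProduct, smul_eq_mul, div_eq_inv_mul]
  simp_rw [h_scale, integral_exp_dotProduct_mul_stdGaussDensity]
  simp only [Real.log_exp, smul_dotProduct, dotProduct_smul, smul_eq_mul]
  field_simp

end MomentGeneratingFunction

section ReducedPhi

variable {ι : Type*} [Fintype ι] (c : ℝ) (d : ι → ℝ) (r : ℝ)

/-- The function `c + φᵀd + φᵀφ/α + 2αr` to which `Φ_r(x, y; φ, α)` reduces, where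
`c = gᵀx − gᵀy` and `d = A(y − x)`. -/
noncomputable def reducedPhi (φ : ι → ℝ) (α : ℝ) : ℝ :=
  c + φ ⬝ᵥ d + (φ ⬝ᵥ φ) / α + 2 * α * r

/-- The values of `reducedPhi` over all `φ` and all `α > 0`, a set whose infimum is the inner
infimum in `Φ_*`. -/
def reducedPhiValues : Set ℝ :=
  {w : ℝ | ∃ φ : ι → ℝ, ∃ α : ℝ, 0 < α ∧ w = reducedPhi c d r φ α}

variable {c d r}

theorem reducedPhi_mem_reducedPhiValues (φ : ι → ℝ) {α : ℝ} (hα : 0 < α) :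
    reducedPhi c d r φ α ∈ reducedPhiValues c d r :=
  ⟨φ, α, hα, rfl⟩

theorem reducedPhi_zero (α : ℝ) : reducedPhi c d r 0 α = c + 2 * α * r := by
  simp only [reducedPhi, zero_dotProduct, zero_div, add_zero]

theorem reducedPhi_eq_add_sq (φ : ι → ℝ) {α : ℝ} (hα : α ≠ 0) :
    reducedPhi c d r φ α
      = c + (φ + (α / 2) • d) ⬝ᵥ (φ + (α / 2) • d) / α + α / 4 * (8 * r - d ⬝ᵥ d) := by
  simp only [reducedPhi, add_dotProduct, dotProduct_add, smul_dotProduct, dotProduct_smul,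
    smul_eq_mul, dotProduct_comm d φ]
  field_simp
  ring

theorem le_reducedPhi (hd : d ⬝ᵥ d ≤ 8 * r) (φ : ι → ℝ) {α : ℝ} (hα : 0 < α) :
    c ≤ reducedPhi c d r φ α := by
  have h_sq : 0 ≤ (φ + (α / 2) • d) ⬝ᵥ (φ + (α / 2) • d) / α :=
    div_nonneg (Finset.sum_nonneg fun _ _ => mul_self_nonneg _) hα.le
  have h_rest : 0 ≤ α / 4 * (8 * r - d ⬝ᵥ d) := mul_nonneg (by positivity) (sub_nonneg.2 hd)
  rw [reducedPhi_eq_add_sq φ hα.ne']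
  linarith

theorem isGLB_reducedPhiValues (hd : d ⬝ᵥ d ≤ 8 * r) : IsGLB (reducedPhiValues c d r) c := by
  refine ⟨?_, fun b hb => ?_⟩
  · rintro _ ⟨φ, α, hα, rfl⟩
    exact le_reducedPhi hd φ hα
  · have h_tendsto : Tendsto (fun α : ℝ => c + 2 * α * r) (𝓝[>] 0) (𝓝 c) := by
      have h_cont : Continuous fun α : ℝ => c + 2 * α * r := by fun_prop
      simpa using (h_cont.tendsto 0).mono_left nhdsWithin_le_nhds
    refine ge_of_tendsto h_tendsto (eventually_mem_nhdsWithin.mono fun α hα => ?_)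
    rw [← reducedPhi_zero (d := d)]
    exact hb (reducedPhi_mem_reducedPhiValues 0 hα)

theorem sInf_reducedPhiValues (hd : d ⬝ᵥ d ≤ 8 * r) : sInf (reducedPhiValues c d r) = c :=
  (isGLB_reducedPhiValues hd).csInf_eq ⟨_, reducedPhi_mem_reducedPhiValues 0 one_pos⟩

theorem not_bddBelow_reducedPhiValues (hd : 8 * r < d ⬝ᵥ d) :
    ¬ BddBelow (reducedPhiValues c d r) := by
  have h_tendsto : Tendsto (fun α : ℝ => c + α / 4 * (8 * r - d ⬝ᵥ d)) atTop atBot :=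
    tendsto_atBot_add_const_left _ _
      ((tendsto_id.atTop_div_const four_pos).atTop_mul_const_of_neg (sub_neg.2 hd))
  rintro ⟨b, hb⟩
  obtain ⟨α, h_lt, hα⟩ := ((h_tendsto.eventually_lt_atBot b).and (eventually_gt_atTop 0)).exists
  have h_le : b ≤ reducedPhi c d r (-((α / 2) • d)) α :=
    hb (reducedPhi_mem_reducedPhiValues _ hα)
  rw [reducedPhi_eq_add_sq _ hα.ne', neg_add_cancel, zero_dotProduct, zero_div, add_zero] at h_le
  exact h_lt.not_ge h_le

end ReducedPhi

section EuclNorm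

variable {L : ℕ}

theorem continuous_euclNorm : Continuous (euclNorm : (Fin L → ℝ) → ℝ) := by
  unfold euclNorm
  fun_prop

theorem euclNorm_zero : euclNorm (0 : Fin L → ℝ) = 0 := by
  simp [euclNorm]

theorem euclNorm_neg (v : Fin L → ℝ) : euclNorm (-v) = euclNorm v := by
  simp only [euclNorm, Pi.neg_apply, neg_sq]

theorem euclNorm_le_two_mul_sqrt_iff (v : Fin L → ℝ) {r : ℝ} (hr : 0 ≤ r) :
    euclNorm v ≤ 2 * √(2 * r) ↔ v ⬝ᵥ v ≤ 8 * r := by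
  have h_sq : (2 * √(2 * r)) ^ 2 = 8 * r := by
    rw [mul_pow, Real.sq_sqrt (by positivity)]
    ring
  rw [euclNorm, Real.sqrt_le_left (by positivity), h_sq]
  simp only [dotProduct, sq]

end EuclNorm

section SaddlePointValue

variable {L n : ℕ} (A : Matrix (Fin L) (Fin n) ℝ) (g : Fin n → ℝ)

theorem gaussPhi_eq_reducedPhi (r : ℝ) (x y : Fin n → ℝ) (φ : Fin L → ℝ) {α : ℝ} (hα : α ≠ 0) :
    gaussPhi A g r x y φ α = reducedPhi (g ⬝ᵥ x - g ⬝ᵥ y) (A *ᵥ (y - x)) r φ α := by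
  simp only [gaussPhi, reducedPhi, ← neg_dotProduct, mul_log_integral_exp_dotProduct_div _ _ hα,
    neg_dotProduct_neg, mulVec_sub, dotProduct_sub]
  rw [neg_dotProduct]
  ring

theorem setOf_gaussPhi_eq_reducedPhiValues (r : ℝ) (x y : Fin n → ℝ) :
    {w : ℝ | ∃ φ : Fin L → ℝ, ∃ α : ℝ, 0 < α ∧ w = gaussPhi A g r x y φ α}
      = reducedPhiValues (g ⬝ᵥ x - g ⬝ᵥ y) (A *ᵥ (y - x)) r := by
  ext w
  refine exists_congr fun φ => exists_congr fun α => and_congr_right fun hα => ?_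
  rw [gaussPhi_eq_reducedPhi A g r x y φ hα.ne']

theorem euclNorm_mulVec_sub_le_iff (x y : Fin n → ℝ) {r : ℝ} (hr : 0 ≤ r) :
    euclNorm (A *ᵥ (x - y)) ≤ 2 * √(2 * r) ↔ A *ᵥ (y - x) ⬝ᵥ A *ᵥ (y - x) ≤ 8 * r := by
  rw [← euclNorm_le_two_mul_sqrt_iff _ hr, ← neg_sub y x, mulVec_neg, euclNorm_neg]

variable {A} in
theorem sInf_reducedPhiValues_of_euclNorm_le (c : ℝ) {x y : Fin n → ℝ} {r : ℝ} (hr : 0 ≤ r)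
    (h : euclNorm (A *ᵥ (x - y)) ≤ 2 * √(2 * r)) :
    sInf (reducedPhiValues c (A *ᵥ (y - x)) r) = c :=
  sInf_reducedPhiValues ((euclNorm_mulVec_sub_le_iff A x y hr).1 h)

variable {A} in
theorem not_bddBelow_reducedPhiValues_of_lt_euclNorm (c : ℝ) {x y : Fin n → ℝ} {r : ℝ}
    (hr : 0 ≤ r) (h : 2 * √(2 * r) < euclNorm (A *ᵥ (x - y))) :
    ¬ BddBelow (reducedPhiValues c (A *ᵥ (y - x)) r) :=
  not_bddBelow_reducedPhiValues (not_le.1 ((euclNorm_mulVec_sub_le_iff A x y hr).not.1 h.not_ge))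

/-- The differences `gᵀx − gᵀy` over the pairs of signals in `X` whose images under `A` are at
Euclidean distance at most `δ`. -/
def closePairGaps (X : Set (Fin n → ℝ)) (δ : ℝ) : Set ℝ :=
  {v : ℝ | ∃ x ∈ X, ∃ y ∈ X, euclNorm (A *ᵥ (x - y)) ≤ δ ∧ v = g ⬝ᵥ x - g ⬝ᵥ y}

variable {X : Set (Fin n → ℝ)}

theorem zero_mem_closePairGaps (hX : X.Nonempty) {δ : ℝ} (hδ : 0 ≤ δ) :
    0 ∈ closePairGaps A g X δ := by
  obtain ⟨z, hz⟩ := hX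
  refine ⟨z, hz, z, hz, ?_, (sub_self _).symm⟩
  rwa [sub_self, mulVec_zero, euclNorm_zero]

theorem isCompact_closePairGaps (hX : IsCompact X) (δ : ℝ) :
    IsCompact (closePairGaps A g X δ) := by
  have h_closed : IsClosed {p : (Fin n → ℝ) × (Fin n → ℝ) | euclNorm (A *ᵥ (p.1 - p.2)) ≤ δ} :=
    isClosed_le (continuous_euclNorm.comp (by fun_prop)) continuous_const
  have h_cont : Continuous fun p : (Fin n → ℝ) × (Fin n → ℝ) => g ⬝ᵥ p.1 - g ⬝ᵥ p.2 := by
    fun_prop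
  convert ((hX.prod hX).inter_right h_closed).image h_cont using 1
  ext v
  simp only [closePairGaps, mem_ofPred_eq, mem_image, mem_inter_iff, mem_prod, Prod.exists]
  grind

theorem two_mul_gaussPhiStar_eq_sSup (hX : X.Nonempty) {r : ℝ} (hr : 0 ≤ r) :
    2 * gaussPhiStar A g X r = sSup (closePairGaps A g X (2 * √(2 * r))) := by
  have h_set : {v : ℝ | ∃ x ∈ X, ∃ y ∈ X,
      v = sInf (reducedPhiValues (g ⬝ᵥ x - g ⬝ᵥ y) (A *ᵥ (y - x)) r)}
        = closePairGaps A g X (2 * √(2 * r)) := by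
    ext v
    constructor
    · rintro ⟨x, hx, y, hy, rfl⟩
      rcases le_or_gt (euclNorm (A *ᵥ (x - y))) (2 * √(2 * r)) with h_le | h_lt
      · exact ⟨x, hx, y, hy, h_le, sInf_reducedPhiValues_of_euclNorm_le _ hr h_le⟩
      · -- A real `sInf` of a set unbounded below is `0`, which is also the gap of a pair `(z, z)`.
        rw [Real.sInf_of_not_bddBelow (not_bddBelow_reducedPhiValues_of_lt_euclNorm _ hr h_lt)]
        exact zero_mem_closePairGaps A g hX (by positivity)
    · rintro ⟨x, hx, y, hy, h_le, rfl⟩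
      exact ⟨x, hx, y, hy, (sInf_reducedPhiValues_of_euclNorm_le _ hr h_le).symm⟩
  simp only [gaussPhiStar, setOf_gaussPhi_eq_reducedPhiValues]
  rw [h_set]
  ring

theorem isGreatest_closePairGaps (hX : X.Nonempty) (hXc : IsCompact X) {r : ℝ} (hr : 0 ≤ r) :
    IsGreatest (closePairGaps A g X (2 * √(2 * r))) (2 * gaussPhiStar A g X r) := by
  rw [two_mul_gaussPhiStar_eq_sSup A g hX hr]
  exact (isCompact_closePairGaps A g hXc _).isGreatest_sSup
    ⟨0, zero_mem_closePairGaps A g hX (by positivity)⟩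

theorem gauss_phiStar_explicit_general (hX : X.Nonempty) (hXc : IsCompact X) {r : ℝ}
    (hr : 0 ≤ r) :
    IsGreatest (closePairGaps A g X (2 * √(2 * r))) (2 * gaussPhiStar A g X r)
    ∧ ∀ x y : Fin n → ℝ,
        (euclNorm (A *ᵥ (x - y)) ≤ 2 * √(2 * r) →
          sInf (reducedPhiValues (g ⬝ᵥ x - g ⬝ᵥ y) (A *ᵥ (y - x)) r) = g ⬝ᵥ x - g ⬝ᵥ y)
        ∧ (2 * √(2 * r) < euclNorm (A *ᵥ (x - y)) →
          ¬ BddBelow (reducedPhiValues (g ⬝ᵥ x - g ⬝ᵥ y) (A *ᵥ (y - x)) r)) :=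
  ⟨isGreatest_closePairGaps A g hX hXc hr, fun _ _ =>
    ⟨sInf_reducedPhiValues_of_euclNorm_le _ hr, not_bddBelow_reducedPhiValues_of_lt_euclNorm _ hr⟩⟩

end SaddlePointValue

/-- In the Gaussian observation model, for every `r > 0` the saddle-point value
admits the explicit form `2Φ_*(r) = max{gᵀx − gᵀy : x, y ∈ X, ‖A(x−y)‖₂ ≤ 2√(2r)}`;
equivalently, for fixed `x, y ∈ X`,
`inf_{φ∈ℝ^L, α>0} [gᵀx − gᵀy + φᵀA(y−x) + φᵀφ/α + 2αr]` equals `gᵀx − gᵀy` when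
`‖A(x−y)‖₂ ≤ 2√(2r)` and `−∞` (the set is unbounded below) otherwise. -/
theorem gauss_phiStar_explicit {L n : ℕ} (A : Matrix (Fin L) (Fin n) ℝ)
    (g : Fin n → ℝ) (X : Set (Fin n → ℝ))
    (hXne : X.Nonempty) (hXcp : IsCompact X) (hXcv : Convex ℝ X)
    (r : ℝ) (hr : 0 < r) :
    IsGreatest
      {v : ℝ | ∃ x ∈ X, ∃ y ∈ X,
        euclNorm (A.mulVec (x - y)) ≤ 2 * Real.sqrt (2 * r) ∧ v = g ⬝ᵥ x - g ⬝ᵥ y}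
      (2 * gaussPhiStar A g X r)
    ∧ ∀ x ∈ X, ∀ y ∈ X,
        (euclNorm (A.mulVec (x - y)) ≤ 2 * Real.sqrt (2 * r) →
          sInf {w : ℝ | ∃ φ : Fin L → ℝ, ∃ α : ℝ, 0 < α ∧
              w = g ⬝ᵥ x - g ⬝ᵥ y + φ ⬝ᵥ A.mulVec (y - x) + (φ ⬝ᵥ φ) / α + 2 * α * r}
            = g ⬝ᵥ x - g ⬝ᵥ y)
        ∧ (2 * Real.sqrt (2 * r) < euclNorm (A.mulVec (x - y)) →
            ¬ BddBelow {w : ℝ | ∃ φ : Fin L → ℝ, ∃ α : ℝ, 0 < α ∧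
              w = g ⬝ᵥ x - g ⬝ᵥ y + φ ⬝ᵥ A.mulVec (y - x) + (φ ⬝ᵥ φ) / α + 2 * α * r}) := by
  have h := gauss_phiStar_explicit_general A g hXne hXcp hr.le
  exact ⟨h.1, fun x _ y _ => h.2 x y⟩
end
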